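/- (Main Theorem) Let L be a completely distributive commutative subspace lattice on a complex separable Hilbert space H and let Φ : Alg L → Alg L be a linear map that is continuous with respect to the weak operator topology and rank preserving, and such that every element of F is consistent with respect to Φ. Then there exist densely defined linear transformations U and V on H such that Φ(A) = U A V* for all A ∈ Alg L, in the sense that: (i) Φ(x⊗f*) = (Ux)⊗(Vf)* whenever x ∈ dom U, f ∈ dom V, and x ∈ M, f ∈ M₋^⊥ for some M ∈ F; and (ii) ⟨Φ(A)h, k⟩ = ⟨A(V*h), U*k⟩ for every A ∈ Alg L, every h in the domain of V*, and every k in the domain of U*. -/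

import Mathlib

open scoped InnerProductSpace

noncomputable section

/-- The join (closed linear span) of a family of subspaces of a Hilbert space. -/
def closedJoin {H : Type*} [NormedAddCommGroup H] [InnerProductSpace ℂ H]
    (S : Set (Submodule ℂ H)) : Submodule ℂ H :=
  (sSup S).topologicalClosure

/-- A subspace lattice on `H`: a family of closed subspaces containing `{0}` and `H`,
closed under arbitrary intersections and arbitrary closed linear spans. -/
structure IsSubspaceLattice {H : Type*} [NormedAddCommGroup H] [InnerProductSpace ℂ H]
    (L : Set (Submodule ℂ H)) : Prop where
  isClosed : ∀ E ∈ L, IsClosed (E : Set H)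
  bot_mem : ⊥ ∈ L
  top_mem : ⊤ ∈ L
  sInf_mem : ∀ S : Set (Submodule ℂ H), S ⊆ L → sInf S ∈ L
  join_mem : ∀ S : Set (Submodule ℂ H), S ⊆ L → closedJoin S ∈ L

/-- `M₋`: the join of all members of `L` that do not contain `M`. -/
def minus {H : Type*} [NormedAddCommGroup H] [InnerProductSpace ℂ H]
    (L : Set (Submodule ℂ H)) (M : Submodule ℂ H) : Submodule ℂ H :=
  closedJoin {E | E ∈ L ∧ ¬ M ≤ E}

open Classical in
/-- The orthogonal projection of `H` onto a closed subspace `E`, as an operator on `H`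
(junk value `0` if `E` is not closed). -/
def projOf {H : Type*} [NormedAddCommGroup H] [InnerProductSpace ℂ H] [CompleteSpace H]
    (E : Submodule ℂ H) : H →L[ℂ] H :=
  if h : IsClosed (E : Set H) then
    haveI : CompleteSpace E := h.completeSpace_coe
    E.subtypeL.comp (Submodule.orthogonalProjectionOnto E)
  else 0

/-- A commutative subspace lattice: the orthogonal projections onto members commute. -/
structure IsCSL {H : Type*} [NormedAddCommGroup H] [InnerProductSpace ℂ H] [CompleteSpace H]
    (L : Set (Submodule ℂ H)) extends IsSubspaceLattice L : Prop where
  commutes : ∀ E ∈ L, ∀ F ∈ L, projOf E * projOf F = projOf F * projOf E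

/-- Complete distributivity of the lattice `L` (meets are intersections, joins are
closed linear spans). -/
def IsCompletelyDistributive {H : Type*} [NormedAddCommGroup H] [InnerProductSpace ℂ H]
    (L : Set (Submodule ℂ H)) : Prop :=
  ∀ (I : Type) (J : I → Type) (E : (i : I) → J i → Submodule ℂ H),
    (∀ i j, E i j ∈ L) →
     ((⨅ i, closedJoin (Set.range (E i)))
        = closedJoin (Set.range fun φ : (∀ i, J i) => ⨅ i, E i (φ i)))
    ∧ (closedJoin (Set.range fun i => ⨅ j, E i j)
        = ⨅ φ : (∀ i, J i), closedJoin (Set.range fun i => E i (φ i)))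

/-- `Alg L`: all bounded operators leaving every member of `L` invariant. -/
def algL {H : Type*} [NormedAddCommGroup H] [InnerProductSpace ℂ H]
    (L : Set (Submodule ℂ H)) : Set (H →L[ℂ] H) :=
  {T | ∀ E ∈ L, ∀ x ∈ E, T x ∈ E}

/-- The rank one operator `x ⊗ f* : h ↦ ⟨h, f⟩ x`. -/
def rankOne {H : Type*} [NormedAddCommGroup H] [InnerProductSpace ℂ H]
    (x f : H) : H →L[ℂ] H :=
  (innerSL ℂ f).smulRight x

/-- The rank of a bounded operator: the dimension of its range. -/
def opRank {H : Type*} [NormedAddCommGroup H] [InnerProductSpace ℂ H]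
    (T : H →L[ℂ] H) : Cardinal :=
  Module.rank ℂ (LinearMap.range (T : H →ₗ[ℂ] H))

/-- `Φ` is a linear map of `Alg L` into itself. -/
structure IsLinearOnAlg {H : Type*} [NormedAddCommGroup H] [InnerProductSpace ℂ H]
    (L : Set (Submodule ℂ H)) (Φ : (H →L[ℂ] H) → (H →L[ℂ] H)) : Prop where
  maps : ∀ A ∈ algL L, Φ A ∈ algL L
  map_add : ∀ A ∈ algL L, ∀ B ∈ algL L, Φ (A + B) = Φ A + Φ B
  map_smul : ∀ (c : ℂ), ∀ A ∈ algL L, Φ (c • A) = c • Φ A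

/-- `Φ` preserves the rank of every finite rank operator in `Alg L`. -/
def RankPreserving {H : Type*} [NormedAddCommGroup H] [InnerProductSpace ℂ H]
    (L : Set (Submodule ℂ H)) (Φ : (H →L[ℂ] H) → (H →L[ℂ] H)) : Prop :=
  ∀ A ∈ algL L, opRank A < Cardinal.aleph0 → opRank (Φ A) = opRank A

/-- `a ∼ b`: (nonzero) vectors `a` and `b` are linearly dependent. -/
def Dep {H : Type*} [NormedAddCommGroup H] [InnerProductSpace ℂ H] (a b : H) : Prop :=
  ∃ c : ℂ, c ≠ 0 ∧ b = c • a

/-- `N` is consistent with respect to `Φ`. -/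
def Consistent {H : Type*} [NormedAddCommGroup H] [InnerProductSpace ℂ H]
    (L : Set (Submodule ℂ H)) (Φ : (H →L[ℂ] H) → (H →L[ℂ] H))
    (N : Submodule ℂ H) : Prop :=
  N ≠ ⊥ ∧ minus L N ≠ ⊤ ∧
    ∃ (U : N →ₗ[ℂ] H) (V : ((minus L N)ᗮ : Submodule ℂ H) →ₗ[ℂ] H),
      ∀ (x : N) (f : ((minus L N)ᗮ : Submodule ℂ H)),
        Φ (rankOne (x : H) (f : H)) = rankOne (U x) (V f)

/-- `N` is twisted with respect to `Φ`. -/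
def Twisted {H : Type*} [NormedAddCommGroup H] [InnerProductSpace ℂ H]
    (L : Set (Submodule ℂ H)) (Φ : (H →L[ℂ] H) → (H →L[ℂ] H))
    (N : Submodule ℂ H) : Prop :=
  N ≠ ⊥ ∧ minus L N ≠ ⊤ ∧
    ∃ (U : ((minus L N)ᗮ : Submodule ℂ H) →ₗ⋆[ℂ] H) (V : N →ₗ⋆[ℂ] H),
      ∀ (x : N) (f : ((minus L N)ᗮ : Submodule ℂ H)),
        Φ (rankOne (x : H) (f : H)) = rankOne (U f) (V x)

/-- `N` is isolated: `dim N = 1` and `N^⊥ ∈ L`. -/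
def Isolated {H : Type*} [NormedAddCommGroup H] [InnerProductSpace ℂ H]
    (L : Set (Submodule ℂ H)) (N : Submodule ℂ H) : Prop :=
  Module.rank ℂ N = 1 ∧ Nᗮ ∈ L

/-- The family `F` of all `N ∈ L` with `N ≠ {0}` and `N₋ ≠ H`. -/
def famF {H : Type*} [NormedAddCommGroup H] [InnerProductSpace ℂ H]
    (L : Set (Submodule ℂ H)) : Set (Submodule ℂ H) :=
  {N | N ∈ L ∧ N ≠ ⊥ ∧ minus L N ≠ ⊤}

/-- Subspaces are comparable if one contains the other. -/
def Comparable' {H : Type*} [NormedAddCommGroup H] [InnerProductSpace ℂ H]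
    (M N : Submodule ℂ H) : Prop :=
  M ≤ N ∨ N ≤ M

/-- There is a chain in `F` from `M` to `N`. -/
def ChainConn {H : Type*} [NormedAddCommGroup H] [InnerProductSpace ℂ H]
    (L : Set (Submodule ℂ H)) (M N : Submodule ℂ H) : Prop :=
  ∃ (n : ℕ) (c : Fin (n + 1) → Submodule ℂ H),
    (∀ k, c k ∈ famF L) ∧ c 0 = M ∧ c (Fin.last n) = N ∧
      ∀ k : Fin n, Comparable' (c k.castSucc) (c k.succ)

/-- `𝔊_N`: all members of `F` that can be connected to `N` by a chain. -/
def GSet {H : Type*} [NormedAddCommGroup H] [InnerProductSpace ℂ H]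
    (L : Set (Submodule ℂ H)) (N : Submodule ℂ H) : Set (Submodule ℂ H) :=
  {M | M ∈ famF L ∧ ChainConn L N M}

end


/-- `Φ` is continuous on `Alg L` with respect to the weak operator topology. -/
def WOTContinuousOn {H : Type*} [NormedAddCommGroup H] [InnerProductSpace ℂ H]
    (L : Set (Submodule ℂ H)) (Φ : (H →L[ℂ] H) → (H →L[ℂ] H)) : Prop :=
  ContinuousOn
    (fun A : H →WOT[ℂ] H =>
      ContinuousLinearMapWOT.ofCLM (Φ (ContinuousLinearMapWOT.toCLM A)))
    (ContinuousLinearMapWOT.ofCLM '' algL L)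

/-!
A consistent member `M` of `F` carries an implementation `φ` of `Φ`, that is
`Φ (x ⊗ f*) = φ x ⊗ (V f)*` for `x ∈ M` and `f ∈ M₋ᗮ`, unique up to a scalar since `Φ` does not
decrease rank. Passing along a closed chain of overlapping members of `F` could multiply `φ` by a
scalar `t ≠ 1`. In a shortest such chain the members are pairwise disjoint, hence orthogonal
because `L` is commutative, and so are the `M₋ᗮ` of its links; then the sum of the operators
`(x i - x (i + 1)) ⊗ (f i)*` around the chain has full rank, whereas `Φ` maps it to a sum of
telescoping operators of smaller rank. Hence `t = 1`, the normalised implementations agree on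
intersections, and they glue to linear maps `u` and `v` because the projections onto the members
of `L` commute.

Both sides of (ii) are functionals continuous in the weak operator topology which agree on the
rank one operators of `Alg L`, and such a functional is determined by its values there: being a
finite sum `A ↦ ∑ ⟪y i, A (x i)⟫`, it vanishes on `Alg L` as soon as it kills these operators.
-/

open Filter Topology

section Hilbert

variable {H : Type*} [NormedAddCommGroup H] [InnerProductSpace ℂ H]
  {L S : Set (Submodule ℂ H)} {E M N Q : Submodule ℂ H}

lemma isClosed_closedJoin (S : Set (Submodule ℂ H)) : IsClosed (closedJoin S : Set H) :=
  Submodule.isClosed_topologicalClosure _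

lemma le_closedJoin (h : E ∈ S) : E ≤ closedJoin S :=
  (le_sSup h).trans (Submodule.le_topologicalClosure _)

lemma closedJoin_le (hE : IsClosed (E : Set H)) (h : ∀ K ∈ S, K ≤ E) : closedJoin S ≤ E :=
  Submodule.topologicalClosure_minimal _ (sSup_le h) hE

lemma orthogonal_closedJoin (S : Set (Submodule ℂ H)) : (closedJoin S)ᗮ = ⨅ E ∈ S, Eᗮ :=
  (Submodule.orthogonal_closure _).trans (Submodule.sInf_orthogonal S).symm

lemma le_minus (hE : E ∈ L) (h : ¬ M ≤ E) : E ≤ minus L M :=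
  le_closedJoin (S := {E | E ∈ L ∧ ¬ M ≤ E}) ⟨hE, h⟩

lemma minus_mono (h : M ≤ N) : minus L M ≤ minus L N :=
  closedJoin_le (isClosed_closedJoin _) fun _ hK => le_minus hK.1 fun hN => hK.2 (h.trans hN)

lemma IsSubspaceLattice.minus_mem (hL : IsSubspaceLattice L) (M : Submodule ℂ H) :
    minus L M ∈ L :=
  hL.join_mem _ fun _ h => h.1

lemma IsSubspaceLattice.inf_mem (hL : IsSubspaceLattice L) (hM : M ∈ L) (hN : N ∈ L) :
    M ⊓ N ∈ L := by
  rw [← sInf_pair]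
  exact hL.sInf_mem _ (Set.pair_subset hM hN)

section Projections

variable [CompleteSpace H]

lemma projOf_eq_starProjection (hE : IsClosed (E : Set H)) [E.HasOrthogonalProjection] :
    projOf E = E.starProjection :=
  dif_pos hE

lemma projOf_apply_mem (hE : IsClosed (E : Set H)) (x : H) : projOf E x ∈ E := by
  have := hE.completeSpace_coe
  rw [projOf_eq_starProjection hE]
  exact E.starProjection_apply_mem x

lemma sub_projOf_mem_orthogonal (hE : IsClosed (E : Set H)) (x : H) :
    x - projOf E x ∈ Eᗮ := by
  have := hE.completeSpace_coe
  rw [projOf_eq_starProjection hE]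
  exact E.sub_starProjection_mem_orthogonal x

lemma projOf_eq_of_mem_orthogonal (hE : IsClosed (E : Set H)) {x y : H} (hy : y ∈ E)
    (h : x - y ∈ Eᗮ) : projOf E x = y := by
  have := hE.completeSpace_coe
  rw [projOf_eq_starProjection hE]
  exact Submodule.eq_starProjection_of_mem_orthogonal hy h

lemma projOf_eq_self (hE : IsClosed (E : Set H)) {x : H} (hx : x ∈ E) : projOf E x = x :=
  projOf_eq_of_mem_orthogonal hE hx (by simp)

lemma inner_projOf_left (hE : IsClosed (E : Set H)) (x y : H) :
    ⟪projOf E x, y⟫_ℂ = ⟪x, projOf E y⟫_ℂ := by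
  have := hE.completeSpace_coe
  rw [projOf_eq_starProjection hE]
  exact E.inner_starProjection_left_eq_right x y

end Projections

/-! ### Reducing subspaces -/

section Reducing

variable [CompleteSpace H]

/-- `E` reduces the lattice `L`: it is closed and invariant under the projections onto the members
of `L`, that is, the projection onto `E` lies in the commutant of these projections. -/
structure IsReducing (L : Set (Submodule ℂ H)) (E : Submodule ℂ H) : Prop where
  isClosed : IsClosed (E : Set H)
  apply_mem : ∀ M ∈ L, ∀ x ∈ E, projOf M x ∈ E

namespace IsReducing

lemma inf (hE : IsReducing L E) (hQ : IsReducing L Q) : IsReducing L (E ⊓ Q) where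
  isClosed := hE.isClosed.inter hQ.isClosed
  apply_mem M hM x hx :=
    ⟨hE.apply_mem M hM x hx.1, hQ.apply_mem M hM x hx.2⟩

protected lemma closedJoin (hS : ∀ E ∈ S, IsReducing L E) : IsReducing L (closedJoin S) where
  isClosed := isClosed_closedJoin S
  apply_mem M hM := by
    have h : sSup S ≤ (closedJoin S).comap (projOf M : H →ₗ[ℂ] H) :=
      sSup_le fun E hE x hx => le_closedJoin hE ((hS E hE).apply_mem M hM x hx)
    exact Submodule.topologicalClosure_minimal _ h
      ((isClosed_closedJoin S).preimage (projOf M).continuous)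

lemma orthogonal (hE : IsReducing L E) (hL : ∀ M ∈ L, IsClosed (M : Set H)) :
    IsReducing L Eᗮ where
  isClosed := E.isClosed_orthogonal
  apply_mem M hM x hx := by
    rw [Submodule.mem_orthogonal] at hx ⊢
    intro u hu
    rw [← inner_projOf_left (hL M hM)]
    exact hx _ (hE.apply_mem M hM u hu)

lemma le_orthogonal_of_disjoint (hE : IsReducing L E) (hM : M ∈ L) (hMc : IsClosed (M : Set H))
    (h : Disjoint E M) : M ≤ Eᗮ := by
  intro m hm
  rw [Submodule.mem_orthogonal]
  intro u hu
  have h0 : projOf M u = 0 :=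
    Submodule.disjoint_def.1 h _ (hE.apply_mem M hM u hu) (projOf_apply_mem hMc u)
  rw [← projOf_eq_self hMc hm, ← inner_projOf_left hMc, h0, inner_zero_left]

lemma le_of_disjoint_orthogonal (hE : IsReducing L E) (hM : M ∈ L) (hMc : IsClosed (M : Set H))
    (h : Disjoint E Mᗮ) : E ≤ M := by
  intro x hx
  have h0 : x - projOf M x = 0 := Submodule.disjoint_def.1 h _
    (E.sub_mem hx (hE.apply_mem M hM x hx)) (sub_projOf_mem_orthogonal hMc x)
  rw [sub_eq_zero.1 h0]
  exact projOf_apply_mem hMc x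

end IsReducing

lemma IsCSL.isReducing (hL : IsCSL L) (hE : E ∈ L) : IsReducing L E where
  isClosed := hL.isClosed E hE
  apply_mem M hM x hx := by
    have hcomm : projOf E (projOf M x) = projOf M (projOf E x) :=
      DFunLike.congr_fun (hL.commutes E hE M hM) x
    rw [projOf_eq_self (hL.isClosed E hE) hx] at hcomm
    rw [← hcomm]
    exact projOf_apply_mem (hL.isClosed E hE) _

end Reducing

/-! ### Longstaff's criterion -/

/-- Longstaff's form of complete distributivity: every `N ∈ L` is the intersection of the `M₋` over
the `M ∈ L` not contained in `N` (the reverse inclusion holds in every subspace lattice). -/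
def IsLongstaff (L : Set (Submodule ℂ H)) : Prop :=
  ∀ N ∈ L, ∀ x : H, (∀ M ∈ L, ¬ M ≤ N → x ∈ minus L M) → x ∈ N

lemma small_of_isClosed [TopologicalSpace.SeparableSpace H]
    (hL : ∀ E ∈ L, IsClosed (E : Set H)) : Small.{0} L := by
  let d := TopologicalSpace.denseSeq H
  refine small_of_injective
    (f := fun (E : L) n => Metric.infDist (d n) ((E : Submodule ℂ H) : Set H)) ?_
  rintro ⟨E, hE⟩ ⟨F, hF⟩ hEF
  have hdist : (Metric.infDist · (E : Set H)) = (Metric.infDist · (F : Set H)) := by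
    refine Continuous.ext_on (TopologicalSpace.denseRange_denseSeq H)
      (Metric.continuous_infDist_pt _) (Metric.continuous_infDist_pt _) ?_
    rintro _ ⟨n, rfl⟩
    exact congrFun hEF n
  refine Subtype.ext (SetLike.ext fun x => ?_)
  rw [← SetLike.mem_coe, ← SetLike.mem_coe, (hL E hE).mem_iff_infDist_zero ⟨0, E.zero_mem⟩,
    (hL F hF).mem_iff_infDist_zero ⟨0, F.zero_mem⟩]
  exact iff_of_eq (congrArg (· = 0) (congrFun hdist x))

/-- `IsCompletelyDistributive` quantifies over index types in `Type`; the smallness assumption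
brings a family indexed by subsets of `L` down to that universe. -/
lemma IsCompletelyDistributive.iInf_closedJoin_le [Small.{0} L] (hcd : IsCompletelyDistributive L)
    {ι : Type*} [Small.{0} ι] (𝒮 : ι → Set (Submodule ℂ H)) (h𝒮 : ∀ i, 𝒮 i ⊆ L) :
    ⨅ i, closedJoin (𝒮 i) ≤
      closedJoin (Set.range fun φ : ∀ i, 𝒮 i => ⨅ i, (φ i : Submodule ℂ H)) := by
  have : ∀ i, Small.{0} (𝒮 i) := fun i => small_subset (h𝒮 i)
  let e := equivShrink ι
  let e' := fun i => equivShrink (𝒮 i)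
  have hcd' := (hcd (Shrink ι) (fun i => Shrink (𝒮 (e.symm i)))
    (fun i j => (e' (e.symm i)).symm j) fun i j => h𝒮 _ ((e' (e.symm i)).symm j).2).1
  have hjoin : ∀ i, closedJoin (Set.range fun j : Shrink (𝒮 (e.symm i)) =>
      ((e' (e.symm i)).symm j : Submodule ℂ H)) = closedJoin (𝒮 (e.symm i)) := fun i => by
    congr 1
    exact ((e' (e.symm i)).symm.surjective.range_comp Subtype.val).trans Subtype.range_coe
  simp only [hjoin] at hcd'
  rw [← e.symm.iInf_comp, hcd']
  refine closedJoin_le (isClosed_closedJoin _) ?_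
  rintro _ ⟨φ, rfl⟩
  let φ' : ∀ i, 𝒮 i := e.symm.piCongrLeft (fun i => 𝒮 i) fun i => (e' (e.symm i)).symm (φ i)
  refine le_closedJoin ⟨φ', ?_⟩
  change ⨅ i, (φ' i : Submodule ℂ H) = _
  rw [← e.symm.iInf_comp]
  exact iInf_congr fun i => congrArg Subtype.val (Equiv.piCongrLeft_apply_apply _ _ _ i)

lemma IsCompletelyDistributive.isLongstaff [Small.{0} L] (hcd : IsCompletelyDistributive L)
    (hL : IsSubspaceLattice L) : IsLongstaff L := by
  intro N hN x hx
  let ι := {M | M ∈ L ∧ ¬ M ≤ N}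
  let 𝒮 : ι → Set (Submodule ℂ H) := fun M => {E | E ∈ L ∧ ¬ (M : Submodule ℂ H) ≤ E}
  have : Small.{0} ι := small_subset (s := L) fun _ hM => hM.1
  have hxinf : x ∈ ⨅ M, closedJoin (𝒮 M) :=
    Submodule.mem_iInf _ |>.2 fun M => hx M M.2.1 M.2.2
  refine closedJoin_le (hL.isClosed N hN) ?_ (hcd.iInf_closedJoin_le 𝒮 (fun _ _ hE => hE.1) hxinf)
  rintro _ ⟨φ, rfl⟩
  -- A choice function whose meet `K` is not below `N` would have chosen some `φ K ≥ K`.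
  by_contra hK
  have hKL : ⨅ M, (φ M : Submodule ℂ H) ∈ L :=
    hL.sInf_mem _ (Set.range_subset_iff.2 fun M => (φ M).2.1)
  exact (φ ⟨_, hKL, hK⟩).2.2 (iInf_le _ _)

lemma IsReducing.exists_inf_ne_bot [CompleteSpace H] (hL : IsSubspaceLattice L)
    (hLs : IsLongstaff L) (hQ : IsReducing L Q) (hQ0 : Q ≠ ⊥) :
    ∃ M ∈ L, Q ⊓ M ≠ ⊥ ∧ Q ⊓ (minus L M)ᗮ ≠ ⊥ := by
  by_contra! hcon
  let N := closedJoin {M | M ∈ L ∧ M ≤ Qᗮ}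
  have hNL : N ∈ L := hL.join_mem _ fun _ h => h.1
  have hNQ : N ≤ Qᗮ := closedJoin_le Q.isClosed_orthogonal fun _ h => h.2
  have hQN : Q ≤ N := fun q hq => by
    refine hLs N hNL q fun M hM hMN => ?_
    have hne : Q ⊓ M ≠ ⊥ := fun h => hMN <| le_closedJoin (S := {M | M ∈ L ∧ M ≤ Qᗮ})
      ⟨hM, hQ.le_orthogonal_of_disjoint hM (hL.isClosed M hM) (disjoint_iff.2 h)⟩
    exact hQ.le_of_disjoint_orthogonal (hL.minus_mem M) (hL.isClosed _ (hL.minus_mem M))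
      (disjoint_iff.2 (hcon M hM hne)) hq
  exact hQ0 (disjoint_self.1 (Q.orthogonal_disjoint.mono_right (hQN.trans hNQ)))

section FamF

lemma IsSubspaceLattice.dense_sSup_famF (hL : IsSubspaceLattice L) (hLs : IsLongstaff L) :
    Dense ((sSup (famF L) : Submodule ℂ H) : Set H) := by
  rw [Submodule.dense_iff_topologicalClosure_eq_top, ← top_le_iff]
  have hJ : closedJoin (famF L) ∈ L := hL.join_mem _ fun _ h => h.1
  intro x _
  refine hLs _ hJ x fun M hM hMJ => ?_
  by_contra hx
  exact hMJ (le_closedJoin ⟨hM, fun h => hMJ (h ▸ bot_le), fun h => hx (h ▸ Submodule.mem_top)⟩)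

lemma IsSubspaceLattice.dense_iSup_orthogonal_minus [CompleteSpace H] (hL : IsSubspaceLattice L)
    (hLs : IsLongstaff L) :
    Dense ((⨆ M : famF L, (minus L M)ᗮ : Submodule ℂ H) : Set H) := by
  rw [Submodule.dense_iff_topologicalClosure_eq_top, Submodule.topologicalClosure_eq_top_iff,
    ← Submodule.iInf_orthogonal, eq_bot_iff]
  intro x hx
  refine hLs ⊥ hL.bot_mem x fun M hM hM0 => ?_
  have hclosed := hL.isClosed _ (hL.minus_mem M)
  by_cases htop : minus L M = ⊤
  · exact htop ▸ Submodule.mem_top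
  · have hxM := (Submodule.mem_iInf _).1 hx ⟨M, hM, fun h => hM0 h.le, htop⟩
    have := hclosed.completeSpace_coe
    rwa [Submodule.orthogonal_orthogonal] at hxM

end FamF

end Hilbert

/-! ### Trace of a finite rank operator mapping each `M` into `M₋` -/

lemma exists_le_forall_map_eq {K V W : Type*} [DivisionRing K] [AddCommGroup V]
    [Module K V] [AddCommGroup W] [Module K W] [FiniteDimensional K W] (Z : V →ₗ[K] W)
    {P : Submodule K V → Prop} {Q₀ : Submodule K V} (hQ₀ : P Q₀) :
    ∃ Q ≤ Q₀, P Q ∧ ∀ R ≤ Q, P R → R.map Z = Q.map Z := by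
  obtain ⟨Q, ⟨hQ, hPQ⟩, hmin⟩ := exists_minimalFor_of_wellFoundedLT
    (fun Q => Q ≤ Q₀ ∧ P Q) (Submodule.map Z) ⟨Q₀, le_rfl, hQ₀⟩
  refine ⟨Q, hQ, hPQ, fun R hR hPR => ?_⟩
  exact le_antisymm (Submodule.map_mono hR) (hmin ⟨hR.trans hQ, hPR⟩ (Submodule.map_mono hR))

section Trace

variable {H : Type*} [NormedAddCommGroup H] [InnerProductSpace ℂ H] [CompleteSpace H]
  {L : Set (Submodule ℂ H)} {ι : Type*} [Fintype ι] {x y : ι → H}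

lemma sum_inner_eq_zero_of_sum_smul_eq_zero (h : ∀ u, ∑ i, ⟪y i, u⟫_ℂ • x i = 0) :
    ∑ i, ⟪y i, x i⟫_ℂ = 0 := by
  obtain ⟨_, b, -⟩ := exists_hilbertBasis ℂ H
  have hsum : HasSum (fun e => ∑ i, ⟪y i, b e⟫_ℂ * ⟪b e, x i⟫_ℂ) (∑ i, ⟪y i, x i⟫_ℂ) :=
    hasSum_sum fun i _ => b.hasSum_inner_mul_inner _ _
  have hterm : ∀ e, ∑ i, ⟪y i, b e⟫_ℂ * ⟪b e, x i⟫_ℂ = 0 := fun e => by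
    simpa only [inner_sum, inner_smul_right, inner_zero_right] using
      congrArg (inner ℂ (b e)) (h (b e))
  simp only [hterm] at hsum
  exact hsum.unique hasSum_zero

lemma sum_inner_projOf_eq_zero {Q : Submodule ℂ H} (hQ : IsClosed (Q : Set H))
    (h : ∀ u ∈ Q, ∑ i, ⟪y i, u⟫_ℂ • x i ∈ Qᗮ) : ∑ i, ⟪y i, projOf Q (x i)⟫_ℂ = 0 := by
  have hcompress : ∀ u, ∑ i, ⟪projOf Q (y i), u⟫_ℂ • projOf Q (x i) = 0 := fun u => by
    have h0 : projOf Q (∑ i, ⟪y i, projOf Q u⟫_ℂ • x i) = 0 :=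
      projOf_eq_of_mem_orthogonal hQ Q.zero_mem (by simpa using h _ (projOf_apply_mem hQ u))
    simpa only [map_sum, map_smul, inner_projOf_left hQ] using h0
  simpa only [inner_projOf_left hQ, projOf_eq_self hQ (projOf_apply_mem hQ _)] using
    sum_inner_eq_zero_of_sum_smul_eq_zero hcompress

/- Shrinking `Q` until the coordinates `⟪x i, ·⟫`, `⟪y i, ·⟫` take the same values on all its
nonzero reducing subspaces, every pair in `Q` can be replaced by one in `Q ⊓ M` and
`Q ⊓ (minus L M)ᗮ`. -/
lemma IsReducing.exists_le_mapsTo_orthogonal (hL : IsCSL L) (hLs : IsLongstaff L)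
    (hT : ∀ M ∈ L, ∀ u ∈ M, ∑ i, ⟪y i, u⟫_ℂ • x i ∈ minus L M)
    {Q₀ : Submodule ℂ H} (hQ₀ : IsReducing L Q₀) (hne : Q₀ ≠ ⊥) :
    ∃ Q ≤ Q₀, IsReducing L Q ∧ Q ≠ ⊥ ∧ ∀ u ∈ Q, ∑ i, ⟪y i, u⟫_ℂ • x i ∈ Qᗮ := by
  let coords (z : ι → H) : H →ₗ[ℂ] ι → ℂ := LinearMap.pi fun i => (innerSL ℂ (z i)).toLinearMap
  obtain ⟨Q, hQ, ⟨hQr, hQne⟩, hmap⟩ := exists_le_forall_map_eq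
    ((coords x).prod (coords y)) (P := fun Q => IsReducing L Q ∧ Q ≠ ⊥) ⟨hQ₀, hne⟩
  have hreplace : ∀ E, IsReducing L E → Q ⊓ E ≠ ⊥ → ∀ u ∈ Q, ∃ u' ∈ E,
      ∀ i, ⟪x i, u'⟫_ℂ = ⟪x i, u⟫_ℂ ∧ ⟪y i, u'⟫_ℂ = ⟪y i, u⟫_ℂ := by
    intro E hE hQE u hu
    obtain ⟨u', hu', heq⟩ := (hmap _ inf_le_left ⟨hQr.inf hE, hQE⟩).ge (Q.mem_map_of_mem hu)
    have hpair := Prod.ext_iff.1 heq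
    exact ⟨u', hu'.2, fun i => ⟨congrFun hpair.1 i, congrFun hpair.2 i⟩⟩
  obtain ⟨M, hM, hQM, hQM'⟩ := hQr.exists_inf_ne_bot hL.toIsSubspaceLattice hLs hQne
  refine ⟨Q, hQ, hQr, hQne, fun u hu => (Submodule.mem_orthogonal _ _).2 fun f hf => ?_⟩
  obtain ⟨u', hu', huu'⟩ := hreplace M (hL.isReducing hM) hQM u hu
  obtain ⟨f', hf', hff'⟩ := hreplace _ ((hL.isReducing (hL.minus_mem M)).orthogonal hL.isClosed)
    hQM' f hf
  calc ⟪f, ∑ i, ⟪y i, u⟫_ℂ • x i⟫_ℂ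
      = ⟪f', ∑ i, ⟪y i, u'⟫_ℂ • x i⟫_ℂ := by
        simp only [inner_sum, inner_smul_right]
        refine Finset.sum_congr rfl fun i _ => ?_
        rw [(huu' i).2, ← inner_conj_symm f, ← inner_conj_symm f', (hff' i).1]
    _ = 0 := Submodule.inner_left_of_mem_orthogonal (hT M hM u' hu') hf'

lemma projOf_closedJoin_pair {Q R : Submodule ℂ H} (hQ : IsClosed (Q : Set H))
    (hR : IsClosed (R : Set H)) (hRQ : R ≤ Qᗮ) (v : H) :
    projOf (closedJoin {Q, R}) v = projOf Q v + projOf R v := by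
  have hQR : Q ≤ Rᗮ := Submodule.le_orthogonal_iff_le_orthogonal.1 hRQ
  have hmem : ∀ {E}, E ∈ ({Q, R} : Set (Submodule ℂ H)) → E ≤ closedJoin {Q, R} := le_closedJoin
  refine projOf_eq_of_mem_orthogonal (isClosed_closedJoin _) (Submodule.add_mem _
    (hmem (by simp) (projOf_apply_mem hQ v)) (hmem (by simp) (projOf_apply_mem hR v))) ?_
  rw [orthogonal_closedJoin, iInf_pair, Submodule.mem_inf]
  constructor
  · rw [← sub_sub]
    exact Qᗮ.sub_mem (sub_projOf_mem_orthogonal hQ v) (hRQ (projOf_apply_mem hR v))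
  · rw [add_comm, ← sub_sub]
    exact Rᗮ.sub_mem (sub_projOf_mem_orthogonal hR v) (hQR (projOf_apply_mem hQ v))

lemma tendsto_projOf_closedJoin {c : Set (Submodule ℂ H)} (hc : ∀ E ∈ c, IsClosed (E : Set H))
    (v : H) :
    Tendsto (fun E : c => projOf (E : Submodule ℂ H) v) atTop (𝓝 (projOf (closedJoin c) v)) := by
  have := fun E : c => (hc E E.2).completeSpace_coe
  have := (isClosed_closedJoin c).completeSpace_coe
  have hsup : closedJoin c = (⨆ E : c, (E : Submodule ℂ H)).topologicalClosure := by
    rw [closedJoin, sSup_eq_iSup']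
  have : CompleteSpace (⨆ E : c, (E : Submodule ℂ H)).topologicalClosure := hsup ▸ this
  rw [hsup, projOf_eq_starProjection (Submodule.isClosed_topologicalClosure _)]
  refine (Submodule.starProjection_tendsto_closure_iSup (fun E : c => (E : Submodule ℂ H))
    (fun _ _ h => h) v).congr fun E => ?_
  rw [projOf_eq_starProjection (hc E E.2)]

lemma exists_maximal_isReducing_sum_inner_eq_zero (hL : IsSubspaceLattice L) (x y : ι → H) :
    ∃ Q, Maximal (fun Q => IsReducing L Q ∧ ∑ i, ⟪y i, projOf Q (x i)⟫_ℂ = 0) Q := by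
  refine (zorn_le_nonempty₀ {Q | IsReducing L Q ∧ ∑ i, ⟪y i, projOf Q (x i)⟫_ℂ = 0}
    (fun c hc hchain E hE => ?_) ⊥ ?_).imp fun _ hQ => hQ.2
  · have : Nonempty c := ⟨⟨E, hE⟩⟩
    have : IsDirectedOrder c := ⟨fun a b => (hchain.total a.2 b.2).elim
      (fun h => ⟨b, h, le_rfl⟩) fun h => ⟨a, le_rfl, h⟩⟩
    refine ⟨closedJoin c, ⟨.closedJoin fun E hE => (hc hE).1, ?_⟩, fun _ => le_closedJoin⟩
    have hlim : Tendsto (fun E : c => ∑ i, ⟪y i, projOf (E : Submodule ℂ H) (x i)⟫_ℂ) atTop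
        (𝓝 (∑ i, ⟪y i, projOf (closedJoin c) (x i)⟫_ℂ)) := tendsto_finsetSum _ fun i _ =>
      tendsto_const_nhds.inner (tendsto_projOf_closedJoin (fun E hE => (hc hE).1.isClosed) (x i))
    exact tendsto_nhds_unique hlim (tendsto_const_nhds.congr fun E => ((hc E.2).2).symm)
  · have hbot : IsClosed ((⊥ : Submodule ℂ H) : Set H) := hL.isClosed _ hL.bot_mem
    have h0 : ∀ v, projOf (⊥ : Submodule ℂ H) v = 0 := fun v =>
      (Submodule.mem_bot ℂ).1 (projOf_apply_mem hbot v)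
    refine ⟨⟨hbot, fun M _ v hv => ?_⟩, by simp only [h0, inner_zero_right, Finset.sum_const_zero]⟩
    rw [(Submodule.mem_bot ℂ).1 hv, map_zero]
    exact Submodule.zero_mem _

theorem IsCSL.sum_inner_eq_zero (hL : IsCSL L) (hLs : IsLongstaff L)
    (hT : ∀ M ∈ L, ∀ u ∈ M, ∑ i, ⟪y i, u⟫_ℂ • x i ∈ minus L M) :
    ∑ i, ⟪y i, x i⟫_ℂ = 0 := by
  obtain ⟨Q, ⟨hQ, hQ0⟩, hmax⟩ :=
    exists_maximal_isReducing_sum_inner_eq_zero hL.toIsSubspaceLattice x y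
  have hQtop : Qᗮ = ⊥ := by
    by_contra hne
    obtain ⟨R, hRQ, hR, hRne, hTR⟩ :=
      IsReducing.exists_le_mapsTo_orthogonal hL hLs hT (hQ.orthogonal hL.isClosed) hne
    have hsum : ∑ i, ⟪y i, projOf (closedJoin {Q, R}) (x i)⟫_ℂ = 0 := by
      simp only [projOf_closedJoin_pair hQ.isClosed hR.isClosed hRQ, inner_add_right,
        Finset.sum_add_distrib, hQ0, sum_inner_projOf_eq_zero hR.isClosed hTR, add_zero]
    have hred : IsReducing L (closedJoin {Q, R}) :=
      .closedJoin fun E hE => hE.elim (fun h => h ▸ hQ) fun h => h ▸ hR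
    have hRQ' : R ≤ Q := (le_closedJoin (by simp)).trans
      (hmax ⟨hred, hsum⟩ (le_closedJoin (by simp)))
    exact hRne (disjoint_self.1 (Q.orthogonal_disjoint.mono hRQ' hRQ))
  have hid : ∀ v, projOf Q v = v := fun v =>
    (sub_eq_zero.1 ((Submodule.mem_bot ℂ).1 (hQtop ▸ sub_projOf_mem_orthogonal hQ.isClosed v))).symm
  simpa only [hid] using hQ0

end Trace

/-! ### Functionals continuous in the weak operator topology -/

section WeakOperatorTopology

variable {𝕜 E F : Type*} [RCLike 𝕜] [NormedAddCommGroup E] [NormedSpace 𝕜 E]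
  [NormedAddCommGroup F] [InnerProductSpace 𝕜 F]

/-- The matrix coefficient `A ↦ ⟪y, A x⟫` as a linear functional. -/
def matrixCoeff (x : E) (y : F) : (E →L[𝕜] F) →ₗ[𝕜] 𝕜 where
  toFun A := ⟪y, A x⟫_𝕜
  map_add' _ _ := inner_add_right _ _ _
  map_smul' _ _ := inner_smul_right _ _ _

lemma exists_eq_sum_inner_of_continuousOn [CompleteSpace F] {W : Submodule 𝕜 (E →L[𝕜] F)}
    {ψ : (E →L[𝕜] F) →ₗ[𝕜] 𝕜} (hψ : ContinuousOn (fun A : E →WOT[𝕜] F => ψ A.toCLM)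
      (ContinuousLinearMapWOT.ofCLM '' W)) :
    ∃ (s : Finset (E × F)) (x : s → E) (y : s → F), ∀ A ∈ W, ψ A = ∑ i, ⟪y i, A (x i)⟫_𝕜 := by
  let coeff : E × F → W →ₗ[𝕜] 𝕜 := fun p => matrixCoeff p.1 p.2 ∘ₗ W.subtype
  have hspan : ψ ∘ₗ W.subtype ∈ Submodule.span 𝕜 (Set.range coeff) := by
    rw [LinearMap.mem_span_iff_continuous]
    let _ : TopologicalSpace W := ⨅ p, TopologicalSpace.induced (coeff p) inferInstance
    have hincl : Continuous fun A : W => (ContinuousLinearMapWOT.ofCLM A.1 : E →WOT[𝕜] F) :=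
      ContinuousLinearMapWOT.continuous_iff.2 fun x y =>
        continuous_iInf_dom (i := (x, y)) continuous_induced_dom
    exact hψ.comp_continuous hincl fun A => ⟨A, A.2, rfl⟩
  obtain ⟨c, hc⟩ := Finsupp.mem_span_range_iff_exists_finsupp.1 hspan
  refine ⟨c.support, fun p => p.1.1, fun p => starRingEnd 𝕜 (c p) • p.1.2, fun A hA => ?_⟩
  calc ψ A = c.sum (fun p a => a • coeff p) ⟨A, hA⟩ := (DFunLike.congr_fun hc ⟨A, hA⟩).symm
    _ = ∑ p ∈ c.support, c p * ⟪p.2, A p.1⟫_𝕜 := by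
      simp only [Finsupp.sum, LinearMap.sum_apply, LinearMap.smul_apply, smul_eq_mul]
      rfl
    _ = ∑ p : c.support, ⟪starRingEnd 𝕜 (c p) • p.1.2, A p.1.1⟫_𝕜 := by
      simp only [inner_smul_left, RCLike.conj_conj]
      exact (Finset.sum_coe_sort c.support fun p => c p * ⟪p.2, A p.1⟫_𝕜).symm

end WeakOperatorTopology

section AlgL

variable {H : Type*} [NormedAddCommGroup H] [InnerProductSpace ℂ H]
  {L : Set (Submodule ℂ H)} {M : Submodule ℂ H} {x f : H}

/-- `Alg L` as a linear subspace of the bounded operators. -/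
def algSubmodule (L : Set (Submodule ℂ H)) : Submodule ℂ (H →L[ℂ] H) where
  carrier := algL L
  add_mem' hA hB E hE x hx := E.add_mem (hA E hE x hx) (hB E hE x hx)
  zero_mem' E _ _ _ := E.zero_mem
  smul_mem' c _ hA E hE x hx := E.smul_mem c (hA E hE x hx)

lemma rankOne_mem_algL (hx : x ∈ M) (hf : f ∈ (minus L M)ᗮ) : rankOne x f ∈ algL L := by
  intro E hE h hh
  change ⟪f, h⟫_ℂ • x ∈ E
  by_cases hME : M ≤ E
  · exact E.smul_mem _ (hME hx)
  · rw [Submodule.inner_left_of_mem_orthogonal (le_minus hE hME hh) hf, zero_smul]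
    exact E.zero_mem

variable [CompleteSpace H]

theorem IsCSL.eq_zero_of_rankOne_eq_zero (hL : IsCSL L) (hLs : IsLongstaff L)
    {ψ : (H →L[ℂ] H) →ₗ[ℂ] ℂ}
    (hψ : ContinuousOn (fun A : H →WOT[ℂ] H => ψ A.toCLM)
      (ContinuousLinearMapWOT.ofCLM '' algL L))
    (h0 : ∀ M ∈ famF L, ∀ u ∈ M, ∀ f ∈ (minus L M)ᗮ, ψ (rankOne u f) = 0)
    {A : H →L[ℂ] H} (hA : A ∈ algL L) : ψ A = 0 := by
  obtain ⟨s, x, y, hxy⟩ := exists_eq_sum_inner_of_continuousOn (W := algSubmodule L) hψ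
  have hminus : ∀ M ∈ L, ∀ u ∈ M, ∑ i, ⟪y i, u⟫_ℂ • x i ∈ minus L M := by
    intro M hM u hu
    by_cases hMF : M ∈ famF L
    · have := (hL.isClosed _ (hL.minus_mem M)).completeSpace_coe
      rw [← (minus L M).orthogonal_orthogonal, Submodule.mem_orthogonal]
      intro f hf
      rw [← h0 M hMF u hu f hf, hxy _ (rankOne_mem_algL hu hf), inner_sum]
      refine Finset.sum_congr rfl fun i _ => ?_
      change _ = ⟪y i, ⟪f, x i⟫_ℂ • u⟫_ℂ
      rw [inner_smul_right, inner_smul_right, mul_comm]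
    · by_cases hM0 : M = ⊥
      · subst hM0
        simp only [(Submodule.mem_bot ℂ).1 hu, inner_zero_right, zero_smul,
          Finset.sum_const_zero, Submodule.zero_mem]
      · rw [not_not.1 fun htop => hMF ⟨hM, hM0, htop⟩]
        exact Submodule.mem_top
  rw [hxy A hA]
  refine hL.sum_inner_eq_zero hLs fun M hM u hu => ?_
  simp only [← map_smul, ← map_sum]
  exact hA _ (hL.minus_mem M) _ (hminus M hM u hu)

end AlgL

/-! ### Ranks of sums of rank one operators -/

section RankOneSums

variable {H : Type*} [NormedAddCommGroup H] [InnerProductSpace ℂ H]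
  {ι : Type*} [Fintype ι] {a a' b b' : ι → H}

lemma sum_rankOne_apply (a b : ι → H) (h : H) :
    (∑ i, rankOne (a i) (b i)) h = ∑ i, ⟪b i, h⟫_ℂ • a i :=
  _root_.sum_apply _ _ _

lemma range_sum_rankOne_le (a b : ι → H) :
    LinearMap.range (∑ i, rankOne (a i) (b i)).toLinearMap ≤ Submodule.span ℂ (Set.range a) := by
  rintro _ ⟨h, rfl⟩
  rw [ContinuousLinearMap.coe_coe, sum_rankOne_apply]
  exact Submodule.sum_smul_mem _ _ fun i _ => Submodule.subset_span ⟨i, rfl⟩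

lemma opRank_sum_rankOne_lt_aleph0 (a b : ι → H) :
    opRank (∑ i, rankOne (a i) (b i)) < Cardinal.aleph0 :=
  (Submodule.rank_mono (range_sum_rankOne_le a b)).trans_lt
    (Module.rank_lt_aleph0_iff.2 (FiniteDimensional.span_of_finite ℂ (Set.finite_range a)))

lemma range_sum_rankOne_eq (hb : Pairwise fun i j => ⟪b i, b j⟫_ℂ = 0) (hb0 : ∀ i, b i ≠ 0) :
    LinearMap.range (∑ i, rankOne (a i) (b i)).toLinearMap = Submodule.span ℂ (Set.range a) := by
  refine (range_sum_rankOne_le a b).antisymm (Submodule.span_le.2 ?_)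
  rintro _ ⟨j, rfl⟩
  refine ⟨(⟪b j, b j⟫_ℂ)⁻¹ • b j, ?_⟩
  rw [ContinuousLinearMap.coe_coe, map_smul, sum_rankOne_apply,
    Finset.sum_eq_single j (fun i _ hij => by rw [hb hij, zero_smul]) (by simp), smul_smul,
    inv_mul_cancel₀ (inner_self_ne_zero.2 (hb0 j)), one_smul]

lemma linearIndependent_of_opRank_le (ha : LinearIndependent ℂ a)
    (hb : Pairwise fun i j => ⟪b i, b j⟫_ℂ = 0) (hb0 : ∀ i, b i ≠ 0)
    (h : opRank (∑ i, rankOne (a i) (b i)) ≤ opRank (∑ i, rankOne (a' i) (b' i))) :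
    LinearIndependent ℂ a' := by
  have hfin (c : ι → H) : FiniteDimensional ℂ (Submodule.span ℂ (Set.range c)) :=
    .span_of_finite ℂ (Set.finite_range c)
  rw [linearIndependent_iff_card_eq_finrank_span] at ha
  rw [linearIndependent_iff_card_le_finrank_span, ha]
  refine Module.finrank_le_finrank_of_rank_le_rank ?_ (Module.rank_lt_aleph0_iff.2 (hfin a'))
  rw [Cardinal.lift_le, ← range_sum_rankOne_eq hb hb0]
  exact h.trans (Submodule.rank_mono (range_sum_rankOne_le a' b'))

end RankOneSums

section Telescoping

variable {K V : Type*} [Field K] [AddCommGroup V] [Module K V] {n : ℕ} {x y : ℕ → V}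

lemma not_linearIndependent_sub_succ (hn : 0 < n) (hy : y n = y 0) :
    ¬ LinearIndependent K fun i : Fin n => y i - y (i + 1) := fun hli => by
  have hsum : ∑ i : Fin n, (1 : K) • (y i - y (i + 1)) = 0 := by
    simp only [one_smul]
    rw [Fin.sum_univ_eq_sum_range fun i => y i - y (i + 1), Finset.sum_range_sub', hy, sub_self]
  exact one_ne_zero (Fintype.linearIndependent_iff.1 hli (fun _ => 1) hsum ⟨0, hn⟩)

lemma linearIndependent_sub_succ (hx : LinearIndependent K fun i : Fin n => x i) {s : K}
    (hs : s ≠ 1) (hxn : x n = s • x 0) :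
    LinearIndependent K fun i : Fin n => x i - x (i + 1) := by
  let D := Submodule.span K (Set.range fun i : Fin n => x i - x (i + 1))
  have hsub : ∀ m ≤ n, x 0 - x m ∈ D := fun m hm => by
    rw [← Finset.sum_range_sub']
    exact D.sum_mem fun i hi => Submodule.subset_span
      ⟨⟨i, (Finset.mem_range.1 hi).trans_le hm⟩, rfl⟩
  have hx0 : x 0 ∈ D := by
    refine (D.smul_mem_iff (sub_ne_zero.2 hs.symm)).1 ?_
    rw [sub_smul, one_smul, ← hxn]
    exact hsub n le_rfl
  have hspan : Submodule.span K (Set.range fun i : Fin n => x i) ≤ D := by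
    refine Submodule.span_le.2 (Set.range_subset_iff.2 fun i => ?_)
    exact (D.sub_mem_iff_right hx0).1 (hsub i i.2.le)
  have : FiniteDimensional K D := .span_of_finite K (Set.finite_range _)
  rw [linearIndependent_iff_card_eq_finrank_span] at hx
  rw [linearIndependent_iff_card_le_finrank_span, hx]
  exact Submodule.finrank_mono hspan

end Telescoping

/-! ### Gluing linear maps -/

section Gluing

variable {R V W ι : Type*} [Ring R] [AddCommGroup V] [Module R V] [AddCommGroup W] [Module R W]
  {S : ι → Submodule R V} {p : ι → V →ₗ[R] V} {G : ι → V →ₗ[R] W}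

lemma exists_forall_mem_finset_eqOn (hpS : ∀ i x, p i x ∈ S i) (hp : ∀ i, ∀ x ∈ S i, p i x = x)
    (hpp : ∀ i j, ∀ x ∈ S j, p i x ∈ S j) (hG : ∀ i j, ∀ x ∈ S i, x ∈ S j → G i x = G j x)
    (s : Finset ι) : ∃ g : V →ₗ[R] W, ∀ i ∈ s, Set.EqOn g (G i) (S i) := by
  classical
  induction s using Finset.induction_on with
  | empty => exact ⟨0, by simp⟩
  | insert a s _ ih =>
    obtain ⟨g, hg⟩ := ih
    refine ⟨g + (G a - g) ∘ₗ p a, fun i hi x hx => ?_⟩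
    change g x + (G a (p a x) - g (p a x)) = G i x
    rcases Finset.mem_insert.1 hi with rfl | hi
    · rw [hp i x hx, add_sub_cancel]
    · rw [hg i hi (hpp a i x hx), hG a i _ (hpS a x) (hpp a i x hx), sub_self, add_zero, hg i hi hx]

end Gluing

section Gluing

variable {K V W ι : Type*} [DivisionRing K] [AddCommGroup V] [Module K V] [AddCommGroup W]
  [Module K W] {S : ι → Submodule K V} {G : ι → V →ₗ[K] W}

lemma exists_forall_eqOn_of_finset
    (h : ∀ s : Finset ι, ∃ g : V →ₗ[K] W, ∀ i ∈ s, Set.EqOn g (G i) (S i)) :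
    ∃ g : V →ₗ[K] W, ∀ i, Set.EqOn g (G i) (S i) := by
  choose g hg using h
  let φ : Finset ι → V →ₗ.[K] W := fun s => ⟨⨆ i ∈ s, S i, (g s).domRestrict _⟩
  have hφ : Monotone φ := fun s t hst => by
    refine ⟨biSup_mono hst, fun x y hxy => ?_⟩
    have hle : ⨆ i ∈ s, S i ≤ LinearMap.eqLocus (g s) (g t) :=
      iSup₂_le fun i hi z hz => (hg s i hi hz).trans (hg t i (hst hi) hz).symm
    exact (hle x.2).trans (congrArg (g t) hxy)
  have hdir : DirectedOn (· ≤ ·) (Set.range φ) := hφ.directed_le.directedOn_range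
  obtain ⟨u, hu⟩ := (LinearPMap.sSup _ hdir).toFun.exists_extend
  refine ⟨u, fun i x hx => ?_⟩
  have hxφ : x ∈ (φ {i}).domain := Submodule.mem_iSup_of_mem i (by simpa using hx)
  calc u x = LinearPMap.sSup _ hdir ⟨x, (LinearPMap.le_sSup hdir ⟨{i}, rfl⟩).1 hxφ⟩ :=
        DFunLike.congr_fun hu ⟨x, (LinearPMap.le_sSup hdir ⟨{i}, rfl⟩).1 hxφ⟩
    _ = φ {i} ⟨x, hxφ⟩ := LinearPMap.sSup_apply hdir ⟨{i}, rfl⟩ ⟨x, hxφ⟩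
    _ = G i x := hg {i} i (Finset.mem_singleton_self i) hx

lemma exists_forall_eqOn {p : ι → V →ₗ[K] V} (hpS : ∀ i x, p i x ∈ S i)
    (hp : ∀ i, ∀ x ∈ S i, p i x = x) (hpp : ∀ i j, ∀ x ∈ S j, p i x ∈ S j)
    (hG : ∀ i j, ∀ x ∈ S i, x ∈ S j → G i x = G j x) :
    ∃ g : V →ₗ[K] W, ∀ i, Set.EqOn g (G i) (S i) :=
  exists_forall_eqOn_of_finset (exists_forall_mem_finset_eqOn hpS hp hpp hG)

end Gluing

/-! ### Walks -/

/-- Walks of a given length along a relation. -/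
inductive Walk {X : Type*} (r : X → X → Prop) : ℕ → X → X → Prop
  | nil (a : X) : Walk r 0 a a
  | cons {n : ℕ} {a b c : X} (h : r a b) (w : Walk r n b c) : Walk r (n + 1) a c

namespace Walk

variable {X : Type*} {r : X → X → Prop} {m n : ℕ} {a b c : X}

lemma append (h : Walk r m a b) (h' : Walk r n b c) : Walk r (m + n) a c := by
  induction h with
  | nil => rwa [Nat.zero_add]
  | cons h _ ih =>
    rw [Nat.succ_add]
    exact cons h (ih h')

lemma single (h : r a b) : Walk r 1 a b := cons h (nil b)

lemma symm [Std.Symm r] (h : Walk r n a b) : Walk r n b a := by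
  induction h with
  | nil a => exact nil a
  | cons h _ ih => exact ih.append (single (Std.Symm.symm _ _ h))

lemma map (f : X → X) (hf : ∀ a b, r a b → r (f a) (f b)) (h : Walk r n a b) :
    Walk r n (f a) (f b) := by
  induction h with
  | nil a => exact nil _
  | cons h _ ih => exact cons (hf _ _ h) ih

lemma exists_seq (h : Walk r n a b) :
    ∃ p : ℕ → X, p 0 = a ∧ p n = b ∧ ∀ i < n, r (p i) (p (i + 1)) := by
  induction h with
  | nil a => exact ⟨fun _ => a, rfl, rfl, by simp⟩
  | @cons n a b c h _ ih =>
    obtain ⟨p, rfl, hn, hp⟩ := ih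
    refine ⟨fun i => Nat.casesOn i a p, rfl, hn, fun i hi => ?_⟩
    cases i with
    | zero => exact h
    | succ i => exact hp i (Nat.lt_of_succ_lt_succ hi)

lemma of_seq {p : ℕ → X} (hp : ∀ i < n, r (p i) (p (i + 1))) {i j : ℕ} (hij : i ≤ j)
    (hj : j ≤ n) : Walk r (j - i) (p i) (p j) := by
  induction j, hij using Nat.le_induction with
  | base =>
    rw [Nat.sub_self]
    exact nil _
  | succ j hij ih =>
    rw [Nat.succ_sub hij]
    exact (ih (Nat.le_of_succ_le hj)).append (single (hp j hj))

end Walk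

/-! ### The family `F` -/

section FamF

variable {H : Type*} [NormedAddCommGroup H] [InnerProductSpace ℂ H]
  {L : Set (Submodule ℂ H)} {M N : Submodule ℂ H}

lemma exists_mem_ne_zero_of_mem_famF (hM : M ∈ famF L) : ∃ x ∈ M, x ≠ 0 :=
  Submodule.exists_mem_ne_zero_of_ne_bot hM.2.1

lemma exists_mem_orthogonal_minus_ne_zero [CompleteSpace H] (hM : M ∈ famF L) :
    ∃ f ∈ (minus L M)ᗮ, f ≠ 0 := by
  have : CompleteSpace (minus L M) := (isClosed_closedJoin _).completeSpace_coe
  exact Submodule.exists_mem_ne_zero_of_ne_bot (mt Submodule.orthogonal_eq_bot_iff.1 hM.2.2)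

lemma IsSubspaceLattice.inf_mem_famF (hL : IsSubspaceLattice L) (hM : M ∈ famF L)
    (hN : N ∈ L) (h : M ⊓ N ≠ ⊥) : M ⊓ N ∈ famF L :=
  ⟨hL.inf_mem hM.1 hN, h,
    fun htop => hM.2.2 (top_le_iff.1 (htop.ge.trans (minus_mono inf_le_left)))⟩

lemma IsSubspaceLattice.inf_orthogonal_minus_le (hL : IsSubspaceLattice L) :
    (minus L M)ᗮ ⊓ (minus L N)ᗮ ≤ (minus L (closedJoin {M, N}))ᗮ := by
  simp only [minus, orthogonal_closedJoin, le_iInf_iff]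
  rintro E ⟨hE, hnot⟩
  by_cases hME : M ≤ E
  · have hNE : ¬ N ≤ E := fun hNE => hnot (closedJoin_le (hL.isClosed E hE) (by
      simp only [Set.mem_insert_iff, Set.mem_singleton_iff, forall_eq_or_imp, forall_eq]
      exact ⟨hME, hNE⟩))
    exact inf_le_right.trans (iInf₂_le E ⟨hE, hNE⟩)
  · exact inf_le_left.trans (iInf₂_le E ⟨hE, hME⟩)

lemma IsSubspaceLattice.closedJoin_pair_mem_famF (hL : IsSubspaceLattice L) (hM : M ∈ famF L)
    (hN : N ∈ L) (h : (minus L M)ᗮ ⊓ (minus L N)ᗮ ≠ ⊥) : closedJoin {M, N} ∈ famF L := by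
  refine ⟨hL.join_mem _ (Set.pair_subset hM.1 hN),
    ne_bot_of_le_ne_bot hM.2.1 (le_closedJoin (Set.mem_insert M _)), fun htop => h ?_⟩
  have hle := hL.inf_orthogonal_minus_le (M := M) (N := N)
  rwa [htop, Submodule.top_orthogonal_eq_bot, le_bot_iff] at hle

end FamF

/-! ### Implementations of `Φ` on members of `F` -/

section RankOne

variable {H : Type*} [NormedAddCommGroup H] [InnerProductSpace ℂ H] {x y f g : H}

lemma rankOne_eq_rankOne (x f : H) : rankOne x f = InnerProductSpace.rankOne ℂ x f := rfl

lemma eq_smul_of_rankOne_eq_rankOne (hf : f ≠ 0) (h : rankOne x f = rankOne y g) :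
    x = ((⟪f, f⟫_ℂ)⁻¹ * ⟪g, f⟫_ℂ) • y := by
  have happ : ⟪f, f⟫_ℂ • x = ⟪g, f⟫_ℂ • y := DFunLike.congr_fun h f
  rw [mul_smul, ← happ, inv_smul_smul₀ (inner_self_ne_zero.2 hf)]

lemma rankOne_left_cancel (hx : x ≠ 0) (h : rankOne x f = rankOne x g) : f = g :=
  ext_inner_right ℂ fun z => smul_left_injective ℂ hx (DFunLike.congr_fun h z)

lemma opRank_eq_zero {T : H →L[ℂ] H} : opRank T = 0 ↔ T = 0 := by
  rw [opRank, Submodule.rank_eq_zero, LinearMap.range_eq_bot,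
    ← ContinuousLinearMap.toLinearMap_zero, ContinuousLinearMap.coe_inj]

end RankOne

section Implementation

variable {H : Type*} [NormedAddCommGroup H] [InnerProductSpace ℂ H]
  {L : Set (Submodule ℂ H)} {Φ : (H →L[ℂ] H) → (H →L[ℂ] H)} {M N : Submodule ℂ H}
  {φ ψ χ : H →ₗ.[ℂ] H} {x f : H}

/-- `Φ` does not decrease the rank of finite rank operators in `Alg L`. -/
def RankNondecreasing (L : Set (Submodule ℂ H)) (Φ : (H →L[ℂ] H) → (H →L[ℂ] H)) : Prop :=
  ∀ A ∈ algL L, opRank A < Cardinal.aleph0 → opRank A ≤ opRank (Φ A)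

lemma RankNondecreasing.map_rankOne_ne_zero (hrank : RankNondecreasing L Φ) (hx : x ∈ M)
    (hf : f ∈ (minus L M)ᗮ) (hx0 : x ≠ 0) (hf0 : f ≠ 0) : Φ (rankOne x f) ≠ 0 := fun h0 => by
  have hle := hrank _ (rankOne_mem_algL hx hf) (by
    simpa using opRank_sum_rankOne_lt_aleph0 (fun _ : Unit => x) fun _ => f)
  rw [h0, opRank_eq_zero.2 rfl, nonpos_iff_eq_zero, opRank_eq_zero] at hle
  exact InnerProductSpace.rankOne_ne_zero hx0 hf0 hle

/-- The partial map `φ` implements `Φ` from the left on the member `M = φ.domain` of `F`: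
`Φ (x ⊗ f*) = φ x ⊗ (V f)*` for `x ∈ M` and `f ∈ M₋ᗮ`, for some linear `V`. -/
structure IsImplementation (L : Set (Submodule ℂ H)) (Φ : (H →L[ℂ] H) → (H →L[ℂ] H))
    (φ : H →ₗ.[ℂ] H) : Prop where
  domain_mem : φ.domain ∈ famF L
  exists_right : ∃ V : H →ₗ[ℂ] H, ∀ x : φ.domain, ∀ f ∈ (minus L φ.domain)ᗮ,
    Φ (rankOne x f) = rankOne (φ x) (V f)

lemma Consistent.exists_isImplementation (h : Consistent L Φ N) (hN : N ∈ L) :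
    ∃ φ, IsImplementation L Φ φ ∧ φ.domain = N := by
  obtain ⟨hbot, htop, U, V, hUV⟩ := h
  obtain ⟨V', hV'⟩ := V.exists_extend
  exact ⟨⟨N, U⟩, ⟨⟨hN, hbot, htop⟩, V', fun x f hf => (hUV x ⟨f, hf⟩).trans
    (congrArg (rankOne (U x)) (DFunLike.congr_fun hV' ⟨f, hf⟩).symm)⟩, rfl⟩

lemma units_smul_le_units_smul (t : ℂˣ) (h : φ ≤ ψ) : t • φ ≤ t • ψ :=
  ⟨h.1, fun _ _ hxy => congrArg (t • ·) (h.2 hxy)⟩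

namespace IsImplementation

lemma smul (hφ : IsImplementation L Φ φ) (t : ℂˣ) : IsImplementation L Φ (t • φ) := by
  obtain ⟨hdom, V, hV⟩ := hφ
  refine ⟨hdom, (starRingEnd ℂ (t : ℂ))⁻¹ • V, fun x f hf => (hV x f hf).trans ?_⟩
  simp [rankOne_eq_rankOne, Units.smul_def, LinearPMap.smul_apply]

variable [CompleteSpace H]

lemma apply_ne_zero (hφ : IsImplementation L Φ φ) (hrank : RankNondecreasing L Φ)
    {x : φ.domain} (hx : x ≠ 0) : φ x ≠ 0 := fun h0 => by
  obtain ⟨V, hV⟩ := hφ.exists_right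
  obtain ⟨f, hf, hf0⟩ := exists_mem_orthogonal_minus_ne_zero hφ.domain_mem
  refine hrank.map_rankOne_ne_zero x.2 hf (by simpa using hx) hf0 ?_
  rw [hV x f hf, h0, rankOne_eq_rankOne, map_zero, zero_apply]

lemma exists_smul_le (hφ : IsImplementation L Φ φ) (hψ : IsImplementation L Φ ψ)
    (hrank : RankNondecreasing L Φ) (h : φ.domain ≤ ψ.domain) : ∃ t : ℂˣ, t • φ ≤ ψ := by
  obtain ⟨V, hV⟩ := hφ.exists_right
  obtain ⟨W, hW⟩ := hψ.exists_right
  obtain ⟨f, hf, hf0⟩ := exists_mem_orthogonal_minus_ne_zero hψ.domain_mem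
  obtain ⟨x₀, hx₀, hx₀0⟩ := exists_mem_ne_zero_of_mem_famF hφ.domain_mem
  have hWf : W f ≠ 0 := fun h0 => hrank.map_rankOne_ne_zero (h hx₀) hf hx₀0 hf0 (by
    simpa [h0, rankOne_eq_rankOne] using hW ⟨x₀, h hx₀⟩ f hf)
  let c := (⟪W f, W f⟫_ℂ)⁻¹ * ⟪V f, W f⟫_ℂ
  have hψφ (x : φ.domain) (y : ψ.domain) (hxy : (x : H) = y) : ψ y = c • φ x := by
    refine eq_smul_of_rankOne_eq_rankOne hWf ?_
    rw [← hW y f hf, ← hxy, hV x f (Submodule.orthogonal_le (minus_mono h) hf)]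
  have hc : c ≠ 0 := fun h0 => hψ.apply_ne_zero hrank (x := ⟨x₀, h hx₀⟩) (by simpa using hx₀0)
    (by rw [hψφ ⟨x₀, hx₀⟩ _ rfl, h0, zero_smul])
  exact ⟨Units.mk0 c hc, h, fun x y hxy => (hψφ x y hxy).symm⟩

lemma exists_le_domain_eq (hφ : IsImplementation L Φ φ) (hrank : RankNondecreasing L Φ)
    (hloc : ∀ N ∈ famF L, ∃ ν, IsImplementation L Φ ν ∧ ν.domain = N) (hN : N ∈ famF L)
    (h : N ≤ φ.domain) : ∃ ν, IsImplementation L Φ ν ∧ ν.domain = N ∧ ν ≤ φ := by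
  obtain ⟨ν, hν, rfl⟩ := hloc N hN
  obtain ⟨t, ht⟩ := hν.exists_smul_le hφ hrank h
  exact ⟨t • ν, hν.smul t, rfl, ht⟩

lemma exists_ge_domain_eq (hφ : IsImplementation L Φ φ) (hrank : RankNondecreasing L Φ)
    (hloc : ∀ N ∈ famF L, ∃ ν, IsImplementation L Φ ν ∧ ν.domain = N) (hN : N ∈ famF L)
    (h : φ.domain ≤ N) : ∃ ν, IsImplementation L Φ ν ∧ ν.domain = N ∧ φ ≤ ν := by
  obtain ⟨ν, hν, rfl⟩ := hloc N hN
  obtain ⟨t, ht⟩ := hφ.exists_smul_le hν hrank h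
  exact ⟨t⁻¹ • ν, hν.smul t⁻¹, rfl, by simpa using units_smul_le_units_smul t⁻¹ ht⟩

end IsImplementation

/-- Two implementations are linked if they are restrictions of a common one. -/
def Linked (L : Set (Submodule ℂ H)) (Φ : (H →L[ℂ] H) → (H →L[ℂ] H)) (φ ψ : H →ₗ.[ℂ] H) : Prop :=
  IsImplementation L Φ φ ∧ IsImplementation L Φ ψ ∧
    ∃ κ, IsImplementation L Φ κ ∧ φ ≤ κ ∧ ψ ≤ κ

namespace Linked

instance : Std.Symm (Linked L Φ) :=
  ⟨fun _ _ ⟨hφ, hψ, κ, hκ, hφκ, hψκ⟩ => ⟨hψ, hφ, κ, hκ, hψκ, hφκ⟩⟩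

lemma of_le (hφ : IsImplementation L Φ φ) (hψ : IsImplementation L Φ ψ) (h : φ ≤ ψ) :
    Linked L Φ φ ψ :=
  ⟨hφ, hψ, ψ, hψ, h, le_rfl⟩

lemma smul (h : Linked L Φ φ ψ) (t : ℂˣ) : Linked L Φ (t • φ) (t • ψ) :=
  let ⟨hφ, hψ, κ, hκ, hφκ, hψκ⟩ := h
  ⟨hφ.smul t, hψ.smul t, t • κ, hκ.smul t, units_smul_le_units_smul t hφκ,
    units_smul_le_units_smul t hψκ⟩

lemma mono_left (h : Linked L Φ φ ψ) (hχ : IsImplementation L Φ χ) (hle : χ ≤ φ) :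
    Linked L Φ χ ψ :=
  let ⟨_, hψ, κ, hκ, hφκ, hψκ⟩ := h
  ⟨hχ, hψ, κ, hκ, hle.trans hφκ, hψκ⟩

end Linked

end Implementation

/-! ### Loops of implementations -/

section Orthogonality

variable {H : Type*} [NormedAddCommGroup H] [InnerProductSpace ℂ H]
  {L : Set (Submodule ℂ H)} {M N : Submodule ℂ H}

lemma pairwise_inner_eq_zero_of_lt {ι : Type*} [LinearOrder ι] {v : ι → H}
    (h : ∀ i j, i < j → ⟪v i, v j⟫_ℂ = 0) : Pairwise fun i j => ⟪v i, v j⟫_ℂ = 0 := fun i j hij =>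
  hij.lt_or_gt.elim (h i j) fun hji => inner_eq_zero_symm.1 (h j i hji)

variable [CompleteSpace H]

lemma IsCSL.isOrtho_of_disjoint (hL : IsCSL L) (hM : M ∈ L) (hN : N ∈ L) (h : Disjoint M N) :
    M ⟂ N :=
  ((hL.isReducing hN).le_orthogonal_of_disjoint hM (hL.isClosed M hM) h.symm)

lemma IsCSL.isOrtho_orthogonal_of_disjoint (hL : IsCSL L) (hM : M ∈ L) (hN : N ∈ L)
    (h : Disjoint Mᗮ Nᗮ) : Mᗮ ⟂ Nᗮ :=
  Submodule.isOrtho_iff_le.2 ((((hL.isReducing hM).orthogonal hL.isClosed).le_of_disjoint_orthogonal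
    hN (hL.isClosed N hN) h).trans (Submodule.le_orthogonal_orthogonal N))

end Orthogonality

section Loop

variable {H : Type*} [NormedAddCommGroup H] [InnerProductSpace ℂ H]
  {L : Set (Submodule ℂ H)} {Φ : (H →L[ℂ] H) → (H →L[ℂ] H)} {Ψ : (H →L[ℂ] H) →ₗ[ℂ] (H →L[ℂ] H)}
  {M N : Submodule ℂ H} {φ ψ φ' ψ' χ : H →ₗ.[ℂ] H} {n : ℕ} {t : ℂˣ}

lemma IsImplementation.exists_map_rankOne_of_mem_graph (hφ : IsImplementation L Φ φ) :
    ∃ V : H →ₗ[ℂ] H, ∀ z ∈ φ.graph, ∀ f ∈ (minus L φ.domain)ᗮ,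
      Φ (rankOne z.1 f) = rankOne z.2 (V f) := by
  obtain ⟨V, hV⟩ := hφ.exists_right
  refine ⟨V, fun z hz f hf => ?_⟩
  obtain ⟨x, rfl⟩ := (φ.mem_graph_iff').1 hz
  exact hV x f hf

lemma linearIndependent_snd_of_mem_graph {ι : Type*} [Finite ι] {κ : ι → H →ₗ.[ℂ] H}
    {z : ι → H × H} {f : ι → H} (hrank : RankNondecreasing L Ψ)
    (hκ : ∀ i, IsImplementation L Ψ (κ i)) (hz : ∀ i, z i ∈ (κ i).graph)
    (hf : ∀ i, f i ∈ (minus L (κ i).domain)ᗮ) (hff : Pairwise fun i j => ⟪f i, f j⟫_ℂ = 0)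
    (hf0 : ∀ i, f i ≠ 0) (hli : LinearIndependent ℂ fun i => (z i).1) :
    LinearIndependent ℂ fun i => (z i).2 := by
  cases nonempty_fintype ι
  choose V hV using fun i => (hκ i).exists_map_rankOne_of_mem_graph
  have hmem (i) : rankOne (z i).1 (f i) ∈ algSubmodule L :=
    rankOne_mem_algL (LinearPMap.mem_domain_of_mem_graph (hz i)) (hf i)
  refine linearIndependent_of_opRank_le (b' := fun i => V i (f i)) hli hff hf0 ?_
  have hmap : Ψ (∑ i, rankOne (z i).1 (f i)) = ∑ i, rankOne (z i).2 (V i (f i)) := by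
    rw [map_sum]
    exact Finset.sum_congr rfl fun i _ => hV i _ (hz i) _ (hf i)
  exact hmap ▸ hrank _ (sum_mem fun i _ => hmem i) (opRank_sum_rankOne_lt_aleph0 _ _)

lemma Walk.linked_smul (w : Walk (Linked L Φ) n φ ψ) (t : ℂˣ) :
    Walk (Linked L Φ) n (t • φ) (t • ψ) :=
  w.map (t • ·) fun _ _ h => h.smul t

lemma Walk.linked_mono_left (w : Walk (Linked L Φ) n φ ψ) (hn : n ≠ 0)
    (hφ' : IsImplementation L Φ φ') (h : φ' ≤ φ) : Walk (Linked L Φ) n φ' ψ := by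
  cases w with
  | nil => exact absurd rfl hn
  | cons hl w => exact .cons (hl.mono_left hφ' h) w

lemma Walk.isImplementation_left (w : Walk (Linked L Φ) n φ ψ) (hn : n ≠ 0) :
    IsImplementation L Φ φ := by
  cases w with
  | nil => exact absurd rfl hn
  | cons hl w => exact hl.1

/-- Two partial maps are compatible if they agree on the intersection of their domains. -/
def Compatible (φ ψ : H →ₗ.[ℂ] H) : Prop :=
  ∀ ⦃x : φ.domain⦄ ⦃y : ψ.domain⦄, (x : H) = y → φ x = ψ y

section Units

variable [CompleteSpace H]

lemma units_eq_one_of_smul_apply_eq (hφ : IsImplementation L Φ φ) (hrank : RankNondecreasing L Φ)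
    {x : φ.domain} (hx : x ≠ 0) (h : (t : ℂ) • φ x = φ x) : t = 1 :=
  Units.ext (smul_left_injective ℂ (hφ.apply_ne_zero hrank hx) (h.trans (one_smul ℂ _).symm))

lemma Compatible.units_eq_one (h : Compatible φ (t • φ)) (hφ : IsImplementation L Φ φ)
    (hrank : RankNondecreasing L Φ) : t = 1 := by
  obtain ⟨x, hx, hx0⟩ := exists_mem_ne_zero_of_mem_famF hφ.domain_mem
  exact units_eq_one_of_smul_apply_eq hφ hrank (x := ⟨x, hx⟩) (by simpa using hx0)
    (h (x := ⟨x, hx⟩) (y := ⟨x, hx⟩) rfl).symm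

end Units

/-- A loop of implementations of length `n`, given by its members, from `p 0` to `t • p 0`, and
by the implementations `κ i` extending two consecutive members. -/
structure IsLoop (L : Set (Submodule ℂ H)) (Φ : (H →L[ℂ] H) → (H →L[ℂ] H)) (n : ℕ) (t : ℂˣ)
    (p κ : ℕ → H →ₗ.[ℂ] H) : Prop where
  closes : p n = t • p 0
  member : ∀ i ≤ n, IsImplementation L Φ (p i)
  link : ∀ i < n, IsImplementation L Φ (κ i)
  left_le : ∀ i < n, p i ≤ κ i
  right_le : ∀ i < n, p (i + 1) ≤ κ i

namespace IsLoop

variable {p κ : ℕ → H →ₗ.[ℂ] H} {i j : ℕ}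

lemma linked (h : IsLoop L Φ n t p κ) (hi : i < n) : Linked L Φ (p i) (p (i + 1)) :=
  ⟨h.member i hi.le, h.member (i + 1) hi, κ i, h.link i hi, h.left_le i hi, h.right_le i hi⟩

lemma walk (h : IsLoop L Φ n t p κ) (hij : i ≤ j) (hj : j ≤ n) :
    Walk (Linked L Φ) (j - i) (p i) (p j) :=
  Walk.of_seq (fun _ hi => h.linked hi) hij hj

lemma walk_around (h : IsLoop L Φ n t p κ) (hi : i ≤ n) (hj : j ≤ n) :
    Walk (Linked L Φ) (n - j + i) (p j) (t • p i) :=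
  (h.closes ▸ h.walk hj le_rfl).append (by simpa using (h.walk i.zero_le hi).linked_smul t)

/- Closing up the images `(z i).2` costs the factor `t⁻¹` on the vectors `(z i).1`: this mismatch
is what contradicts the rank condition when `t ≠ 1`. -/
lemma exists_mem_graph (h : IsLoop L Φ n t p κ) (hn : 0 < n) :
    ∃ z : ℕ → H × H, (∀ i ≤ n, z i ∈ (p i).graph) ∧ (∀ i < n, (z i).1 ≠ 0) ∧
      (z n).1 = (t⁻¹ : ℂˣ) • (z 0).1 ∧ (z n).2 = (z 0).2 := by
  have hex (i) (hi : i < n) : ∃ z ∈ (p i).graph, z.1 ≠ 0 := by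
    obtain ⟨x, hx, hx0⟩ := exists_mem_ne_zero_of_mem_famF (h.member i hi.le).domain_mem
    exact ⟨_, (p i).mem_graph ⟨x, hx⟩, hx0⟩
  choose! z hz hz0 using hex
  have hupd (i) (hi : i < n) (w : H × H) : Function.update z n w i = z i :=
    Function.update_of_ne hi.ne w z
  refine ⟨Function.update z n ((t⁻¹ : ℂˣ) • (z 0).1, (z 0).2), fun i hi => ?_,
    fun i hi => (hupd i hi _).symm ▸ hz0 i hi, ?_, ?_⟩
  · rcases hi.eq_or_lt with rfl | hi
    · obtain ⟨x, hx⟩ := ((p 0).mem_graph_iff').1 (hz 0 hn)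
      rw [Function.update_self, h.closes, LinearPMap.mem_graph_iff, ← hx]
      exact ⟨(t⁻¹ : ℂˣ) • x, rfl, by
        rw [LinearPMap.smul_apply, Units.smul_def, Units.smul_def, LinearPMap.map_smul, smul_smul,
          Units.mul_inv, one_smul]⟩
    · exact (hupd i hi _).symm ▸ hz i hi
  · rw [Function.update_self, hupd 0 hn]
  · rw [Function.update_self, hupd 0 hn]

variable [CompleteSpace H]

lemma eq_one_of_disjoint (h : IsLoop L Ψ n t p κ) (hL : IsCSL L) (hrank : RankNondecreasing L Ψ)
    (hn : 0 < n)
    (hdisj : ∀ i j, i < j → j < n → Disjoint (p i).domain (p j).domain)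
    (hdisj' : ∀ i j, i < j → j < n →
      Disjoint (minus L (κ i).domain)ᗮ (minus L (κ j).domain)ᗮ) : t = 1 := by
  obtain ⟨z, hz, hz0, hzn, hzn'⟩ := h.exists_mem_graph hn
  choose f hf hf0 using fun i : Fin n =>
    exists_mem_orthogonal_minus_ne_zero (h.link i i.2).domain_mem
  have hff : Pairwise fun i j => ⟪f i, f j⟫_ℂ = 0 :=
    pairwise_inner_eq_zero_of_lt fun i j hij =>
      (hL.isOrtho_orthogonal_of_disjoint (hL.minus_mem _) (hL.minus_mem _)
        (hdisj' i j hij j.2)).inner_eq (hf i) (hf j)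
  have hzz : Pairwise fun i j : Fin n => ⟪(z i).1, (z j).1⟫_ℂ = 0 :=
    pairwise_inner_eq_zero_of_lt fun i j hij =>
      (hL.isOrtho_of_disjoint (h.member i i.2.le).domain_mem.1 (h.member j j.2.le).domain_mem.1
        (hdisj i j hij j.2)).inner_eq (LinearPMap.mem_domain_of_mem_graph (hz i i.2.le))
        (LinearPMap.mem_domain_of_mem_graph (hz j j.2.le))
  by_contra ht
  have hli : LinearIndependent ℂ fun i : Fin n => (z i).1 - (z (i + 1)).1 :=
    linearIndependent_sub_succ (x := fun i => (z i).1) (s := (t⁻¹ : ℂˣ))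
      (linearIndependent_of_ne_zero_of_inner_eq_zero (fun i => hz0 i i.2) hzz)
      (by simpa using ht) hzn
  exact not_linearIndependent_sub_succ (y := fun i => (z i).2) hn hzn'
    (linearIndependent_snd_of_mem_graph (z := fun i : Fin n => z i - z (i + 1)) hrank
      (fun i => h.link i i.2)
      (fun i => sub_mem (LinearPMap.le_graph_of_le (h.left_le i i.2) (hz i i.2.le))
        (LinearPMap.le_graph_of_le (h.right_le i i.2) (hz (i + 1) i.2))) hf hff hf0 hli)

lemma eq_one_of_not_disjoint_domain (h : IsLoop L Φ n t p κ) (hrank : RankNondecreasing L Φ)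
    (ih : ∀ m < n, ∀ φ ψ, Walk (Linked L Φ) m φ ψ → Compatible φ ψ) (hij : i < j) (hj : j < n)
    (hd : ¬ Disjoint (p i).domain (p j).domain) : t = 1 := by
  obtain ⟨x, hx, hx0⟩ := Submodule.exists_mem_ne_zero_of_ne_bot (mt disjoint_iff.2 hd)
  have hij' : p i ⟨x, hx.1⟩ = p j ⟨x, hx.2⟩ := ih _ (by lia) _ _ (h.walk hij.le hj.le) rfl
  have hji : p j ⟨x, hx.2⟩ = (t • p i) ⟨x, hx.1⟩ :=
    ih _ (by lia) _ _ (h.walk_around (hij.le.trans hj.le) hj.le) rfl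
  exact units_eq_one_of_smul_apply_eq (h.member i (hij.le.trans hj.le)) hrank (x := ⟨x, hx.1⟩)
    (by simpa using hx0) (hij'.trans hji).symm

lemma eq_one_of_not_disjoint_orthogonal_minus (h : IsLoop L Φ n t p κ) (hL : IsSubspaceLattice L)
    (hrank : RankNondecreasing L Φ)
    (hloc : ∀ N ∈ famF L, ∃ ν, IsImplementation L Φ ν ∧ ν.domain = N)
    (ih : ∀ m < n, ∀ φ ψ, Walk (Linked L Φ) m φ ψ → Compatible φ ψ) (hij : i < j) (hj : j < n)
    (hd : ¬ Disjoint (minus L (κ i).domain)ᗮ (minus L (κ j).domain)ᗮ) : t = 1 := by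
  have hi := hij.trans hj
  have hκi := h.link i hi
  have hκj := h.link j hj
  obtain ⟨ν, hν, hdom, hiν⟩ := hκi.exists_ge_domain_eq hrank hloc
    (hL.closedJoin_pair_mem_famF hκi.domain_mem hκj.domain_mem.1 (mt disjoint_iff.2 hd))
    (le_closedJoin (Set.mem_insert _ _))
  obtain ⟨s, hs⟩ := hκj.exists_smul_le hν hrank (hdom ▸ le_closedJoin (by simp))
  have hclose {m} (hm : m < n) {q : H →ₗ.[ℂ] H} {r : ℂˣ} (hq : IsImplementation L Φ q)
      (w : Walk (Linked L Φ) m q (r • q)) : r = 1 := (ih m hm _ _ w).units_eq_one hq hrank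
  have hpi := h.member (i + 1) hi
  have hpj := h.member (j + 1) hj
  have hs1 : s = 1 := by
    have hl : Linked L Φ (s • p j) (p (i + 1)) := ⟨(h.member j hj.le).smul s, hpi, ν, hν,
      (units_smul_le_units_smul s (h.left_le j hj)).trans hs, (h.right_le i hi).trans hiν⟩
    have hl' : Linked L Φ (p j) (s⁻¹ • p (i + 1)) := by simpa using hl.smul s⁻¹
    exact inv_eq_one.1 (hclose (by lia) hpi ((h.walk hij hj.le).append (.single hl')))
  rw [hs1, one_smul] at hs
  have hl : Linked L Φ (p i) (p (j + 1)) := ⟨h.member i hi.le, hpj, ν, hν,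
    (h.left_le i hi).trans hiν, (h.right_le j hj).trans hs⟩
  exact hclose (by lia) hpj ((h.walk_around hi.le hj).append (.single (hl.smul t)))

lemma eq_one (h : IsLoop L Ψ n t p κ) (hL : IsCSL L) (hrank : RankNondecreasing L Ψ)
    (hloc : ∀ N ∈ famF L, ∃ ν, IsImplementation L Ψ ν ∧ ν.domain = N) (hn : 0 < n)
    (ih : ∀ m < n, ∀ φ ψ, Walk (Linked L Ψ) m φ ψ → Compatible φ ψ) : t = 1 := by
  by_contra ht
  exact ht (h.eq_one_of_disjoint hL hrank hn
    (fun i j hij hj => of_not_not fun hd =>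
      ht (h.eq_one_of_not_disjoint_domain hrank ih hij hj hd))
    fun i j hij hj => of_not_not fun hd =>
      ht (h.eq_one_of_not_disjoint_orthogonal_minus hL.toIsSubspaceLattice hrank hloc ih hij hj hd))

end IsLoop

lemma Walk.exists_isLoop (w : Walk (Linked L Φ) n φ (t • φ)) (hφ : IsImplementation L Φ φ) :
    ∃ p κ, IsLoop L Φ n t p κ := by
  obtain ⟨p, rfl, hn, hp⟩ := w.exists_seq
  choose! h0 h1 κ hκ hleft hright using hp
  refine ⟨p, κ, hn, fun i hi => ?_, hκ, hleft, hright⟩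
  rcases hi.eq_or_lt with rfl | hi
  · exact hn ▸ hφ.smul t
  · exact h0 i hi

variable [CompleteSpace H]

theorem Walk.compatible (hL : IsCSL L) (hrank : RankNondecreasing L Ψ)
    (hloc : ∀ N ∈ famF L, ∃ ν, IsImplementation L Ψ ν ∧ ν.domain = N)
    (w : Walk (Linked L Ψ) n φ ψ) : Compatible φ ψ := by
  induction n using Nat.strong_induction_on generalizing φ ψ with
  | _ n ih =>
    intro x y hxy
    rcases n.eq_zero_or_pos with rfl | hn
    · cases w
      exact congrArg φ (Subtype.ext hxy)
    by_cases hx : x = 0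
    · have hy : y = 0 := Subtype.ext (by simp [← hxy, hx])
      rw [hx, hy, LinearPMap.map_zero, LinearPMap.map_zero]
    have hφ := w.isImplementation_left hn.ne'
    have hψ := w.symm.isImplementation_left hn.ne'
    have hxK : (x : H) ∈ φ.domain ⊓ ψ.domain := ⟨x.2, hxy ▸ y.2⟩
    have hK := hL.inf_mem_famF hφ.domain_mem hψ.domain_mem.1
      (Submodule.ne_bot_iff _ |>.2 ⟨x, hxK, by simpa using hx⟩)
    obtain ⟨χ, hχ, hdom, hχφ⟩ := hφ.exists_le_domain_eq hrank hloc hK inf_le_left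
    obtain ⟨t, ht⟩ := hχ.exists_smul_le hψ hrank (hdom ▸ inf_le_right)
    have w' : Walk (Linked L Ψ) n χ (t • χ) :=
      ((w.linked_mono_left hn.ne' hχ hχφ).symm.linked_mono_left hn.ne' (hχ.smul t) ht).symm
    obtain ⟨p, κ, hloop⟩ := w'.exists_isLoop hχ
    rw [hloop.eq_one hL hrank hloc hn fun m hm φ ψ => ih m hm, one_smul] at ht
    have hxχ : (x : H) ∈ χ.domain := hdom ▸ hxK
    exact (hχφ.2 (x := ⟨x, hxχ⟩) rfl).symm.trans (ht.2 hxy)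

end Loop

/-! ### Global implementations -/

section Gluing

variable {H W ι : Type*} [NormedAddCommGroup H] [InnerProductSpace ℂ H] [CompleteSpace H]
  [AddCommGroup W] [Module ℂ W] {L : Set (Submodule ℂ H)} {S : ι → Submodule ℂ H}
  {G : ι → H →ₗ[ℂ] W}

lemma IsCSL.exists_forall_eqOn (hL : IsCSL L) (hS : ∀ i, S i ∈ L)
    (hG : ∀ i j, ∀ x ∈ S i, x ∈ S j → G i x = G j x) :
    ∃ g : H →ₗ[ℂ] W, ∀ i, Set.EqOn g (G i) (S i) :=
  _root_.exists_forall_eqOn (p := fun i => (projOf (S i) : H →ₗ[ℂ] H))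
    (fun i => projOf_apply_mem (hL.isClosed _ (hS i)))
    (fun i _ => projOf_eq_self (hL.isClosed _ (hS i)))
    (fun i j => (hL.isReducing (hS j)).apply_mem _ (hS i)) hG

lemma IsCSL.exists_forall_eqOn_orthogonal (hL : IsCSL L) (hS : ∀ i, S i ∈ L)
    (hG : ∀ i j, ∀ x ∈ (S i)ᗮ, x ∈ (S j)ᗮ → G i x = G j x) :
    ∃ g : H →ₗ[ℂ] W, ∀ i, Set.EqOn g (G i) (S i)ᗮ :=
  _root_.exists_forall_eqOn (p := fun i => LinearMap.id - (projOf (S i) : H →ₗ[ℂ] H))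
    (fun i => sub_projOf_mem_orthogonal (hL.isClosed _ (hS i)))
    (fun i x hx => sub_eq_self.2
      (projOf_eq_of_mem_orthogonal (hL.isClosed _ (hS i)) (S i).zero_mem (by simpa using hx)))
    (fun i j x hx => sub_mem hx
      (((hL.isReducing (hS j)).orthogonal hL.isClosed).apply_mem _ (hS i) x hx)) hG

end Gluing

section Global

variable {H : Type*} [NormedAddCommGroup H] [InnerProductSpace ℂ H]
  {L : Set (Submodule ℂ H)} {Φ : (H →L[ℂ] H) → (H →L[ℂ] H)} {Ψ : (H →L[ℂ] H) →ₗ[ℂ] (H →L[ℂ] H)}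
  {M N : Submodule ℂ H} {φ ψ χ : H →ₗ.[ℂ] H} {x f : H}

/-- Two implementations are connected if, after rescaling one of them, they are joined by a
walk. -/
def Connected (L : Set (Submodule ℂ H)) (Φ : (H →L[ℂ] H) → (H →L[ℂ] H)) (φ ψ : H →ₗ.[ℂ] H) : Prop :=
  ∃ (t : ℂˣ) (n : ℕ), Walk (Linked L Φ) n φ (t • ψ)

namespace Connected

lemma refl (φ : H →ₗ.[ℂ] H) : Connected L Φ φ φ := ⟨1, 0, (one_smul ℂˣ φ).symm ▸ .nil φ⟩

lemma symm (h : Connected L Φ φ ψ) : Connected L Φ ψ φ := by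
  obtain ⟨t, n, w⟩ := h
  exact ⟨t⁻¹, n, by simpa using w.symm.linked_smul t⁻¹⟩

lemma trans (h : Connected L Φ φ ψ) (h' : Connected L Φ ψ χ) : Connected L Φ φ χ := by
  obtain ⟨t, m, w⟩ := h
  obtain ⟨s, n, w'⟩ := h'
  exact ⟨t * s, m + n, mul_smul t s χ ▸ w.append (w'.linked_smul t)⟩

variable [CompleteSpace H]

lemma of_domain_le (hφ : IsImplementation L Φ φ) (hψ : IsImplementation L Φ ψ)
    (hrank : RankNondecreasing L Φ) (h : φ.domain ≤ ψ.domain) : Connected L Φ φ ψ := by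
  obtain ⟨t, ht⟩ := hφ.exists_smul_le hψ hrank h
  exact symm ⟨t, 1, .single (Std.Symm.symm _ _ (.of_le (hφ.smul t) hψ ht))⟩

lemma of_not_disjoint (hφ : IsImplementation L Φ φ) (hψ : IsImplementation L Φ ψ)
    (hL : IsSubspaceLattice L) (hrank : RankNondecreasing L Φ)
    (hloc : ∀ N ∈ famF L, ∃ ν, IsImplementation L Φ ν ∧ ν.domain = N)
    (h : ¬ Disjoint φ.domain ψ.domain) : Connected L Φ φ ψ := by
  obtain ⟨ν, hν, hdom⟩ :=
    hloc _ (hL.inf_mem_famF hφ.domain_mem hψ.domain_mem.1 (mt disjoint_iff.2 h))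
  exact (of_domain_le hν hφ hrank (hdom ▸ inf_le_left)).symm.trans
    (of_domain_le hν hψ hrank (hdom ▸ inf_le_right))

end Connected

lemma exists_selector_of_equivalence {X : Type*} {r : X → X → Prop} (hr : Equivalence r) :
    ∃ c : X → X, (∀ a, r (c a) a) ∧ ∀ a b, r a b → c a = c b := by
  let s : Setoid X := ⟨r, hr⟩
  exact ⟨fun a => (Quotient.mk s a).out, Quotient.mk_out, fun a b h =>
    congrArg Quotient.out (Quotient.sound h)⟩

variable [CompleteSpace H]

/- The implementations in a connected component are normalised by walks from a fixed member. -/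
lemma exists_compatible_implementations (hL : IsCSL L) (hrank : RankNondecreasing L Ψ)
    (hloc : ∀ N ∈ famF L, ∃ ν, IsImplementation L Ψ ν ∧ ν.domain = N) :
    ∃ ν : famF L → H →ₗ.[ℂ] H, (∀ M, IsImplementation L Ψ (ν M)) ∧ (∀ M, (ν M).domain = M) ∧
      ∀ M N, Compatible (ν M) (ν N) := by
  choose β hβ hdom using fun N : famF L => hloc N N.2
  obtain ⟨c, hc, hcc⟩ := exists_selector_of_equivalence
    (r := fun M N => Connected L Ψ (β M) (β N)) ⟨fun M => .refl _, .symm, .trans⟩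
  choose t n w using hc
  refine ⟨fun M => t M • β M, fun M => (hβ M).smul (t M), hdom, fun M N x y hxy => ?_⟩
  by_cases hx : x = 0
  · have hy : y = 0 := Subtype.ext (by simp [← hxy, hx])
    rw [hx, hy, LinearPMap.map_zero, LinearPMap.map_zero]
  have hd : ¬ Disjoint (β M).domain (β N).domain := fun hd =>
    hx (Subtype.ext (Submodule.disjoint_def.1 hd x x.2 (hxy ▸ y.2)))
  have hMN := hcc M N (.of_not_disjoint (hβ M) (hβ N) hL.toIsSubspaceLattice hrank hloc hd)
  exact Walk.compatible hL hrank hloc ((w M).symm.append (hMN ▸ w N)) hxy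

lemma IsImplementation.right_apply_eq {V W : H →ₗ[ℂ] H} (hφ : IsImplementation L Φ φ)
    (hrank : RankNondecreasing L Φ)
    (hV : ∀ x : φ.domain, ∀ f ∈ (minus L φ.domain)ᗮ, Φ (rankOne x f) = rankOne (φ x) (V f))
    (hW : ∀ x : ψ.domain, ∀ f ∈ (minus L ψ.domain)ᗮ, Φ (rankOne x f) = rankOne (ψ x) (W f))
    (hle : φ.domain ≤ ψ.domain) (h : Compatible φ ψ) (hf : f ∈ (minus L ψ.domain)ᗮ) :
    V f = W f := by
  obtain ⟨x, hx, hx0⟩ := exists_mem_ne_zero_of_mem_famF hφ.domain_mem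
  have hφx : φ ⟨x, hx⟩ ≠ 0 := hφ.apply_ne_zero hrank (by simpa using hx0)
  refine rankOne_left_cancel hφx ?_
  rw [← hV ⟨x, hx⟩ f (Submodule.orthogonal_le (minus_mono hle) hf),
    h (x := ⟨x, hx⟩) (y := ⟨x, hle hx⟩) rfl, ← hW ⟨x, hle hx⟩ f hf]

theorem exists_map_rankOne_eq (hL : IsCSL L) (hrank : RankNondecreasing L Ψ)
    (hcons : ∀ N ∈ famF L, Consistent L Ψ N) :
    ∃ u v : H →ₗ[ℂ] H, ∀ M ∈ famF L, ∀ x ∈ M, ∀ f ∈ (minus L M)ᗮ,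
      Ψ (rankOne x f) = rankOne (u x) (v f) := by
  have hloc (N) (hN : N ∈ famF L) := (hcons N hN).exists_isImplementation hN.1
  obtain ⟨ν, hν, hdom, hcomp⟩ := exists_compatible_implementations hL hrank hloc
  choose V hV using fun M => (hν M).exists_right
  choose G hG using fun M => (ν M).toFun.exists_extend
  have hGν (M) (x : (ν M).domain) : G M x = ν M x := DFunLike.congr_fun (hG M) x
  obtain ⟨u, hu⟩ := hL.exists_forall_eqOn (S := fun M => (ν M).domain) (G := G)
    (fun M => (hν M).domain_mem.1) fun M N x hM hN =>
      (hGν M ⟨x, hM⟩).trans ((hcomp M N rfl).trans (hGν N ⟨x, hN⟩).symm)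
  obtain ⟨v, hv⟩ := hL.exists_forall_eqOn_orthogonal (S := fun M => minus L (ν M).domain) (G := V)
    (fun M => hL.minus_mem _) fun M N f hM hN => by
      by_cases hf : f = 0
      · rw [hf, map_zero, map_zero]
      have hmem : f ∈ (minus L (ν M).domain)ᗮ ⊓ (minus L (ν N).domain)ᗮ := ⟨hM, hN⟩
      let K : famF L := ⟨_, hL.closedJoin_pair_mem_famF (hν M).domain_mem (hν N).domain_mem.1
        (Submodule.ne_bot_iff _ |>.2 ⟨f, hmem, hf⟩)⟩
      have hfK : f ∈ (minus L (ν K).domain)ᗮ := hdom K ▸ hL.inf_orthogonal_minus_le hmem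
      have hle (J : famF L) (hJ : (ν J).domain ∈ ({(ν M).domain, (ν N).domain} : Set _)) :
          (ν J).domain ≤ (ν K).domain := hdom K ▸ le_closedJoin hJ
      exact ((hν M).right_apply_eq hrank (hV M) (hV K) (hle M (by simp)) (hcomp M K) hfK).trans
        ((hν N).right_apply_eq hrank (hV N) (hV K) (hle N (by simp)) (hcomp N K) hfK).symm
  refine ⟨u, v, fun M hM x hx f hf => ?_⟩
  obtain ⟨M, rfl⟩ : ∃ K : famF L, (ν K).domain = M := ⟨⟨M, hM⟩, hdom _⟩
  rw [hu M hx, hv M hf, hGν M ⟨x, hx⟩, hV M ⟨x, hx⟩ f hf]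

end Global

/-! ### Linear extension of `Φ` -/

section Extension

variable {H : Type*} [NormedAddCommGroup H] [InnerProductSpace ℂ H]
  {L : Set (Submodule ℂ H)} {Φ Ψ : (H →L[ℂ] H) → (H →L[ℂ] H)} {N : Submodule ℂ H}

lemma exists_linearMap_eqOn_algL (hadd : ∀ A ∈ algL L, ∀ B ∈ algL L, Φ (A + B) = Φ A + Φ B)
    (hsmul : ∀ c : ℂ, ∀ A ∈ algL L, Φ (c • A) = c • Φ A) :
    ∃ Ψ : (H →L[ℂ] H) →ₗ[ℂ] (H →L[ℂ] H), Set.EqOn Ψ Φ (algL L) := by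
  let Φ' : algSubmodule L →ₗ[ℂ] (H →L[ℂ] H) :=
    { toFun A := Φ A
      map_add' A B := hadd A A.2 B B.2
      map_smul' c A := hsmul c A A.2 }
  obtain ⟨Ψ, hΨ⟩ := Φ'.exists_extend
  exact ⟨Ψ, fun A hA => DFunLike.congr_fun hΨ ⟨A, hA⟩⟩

lemma RankNondecreasing.congr (h : RankNondecreasing L Φ) (hΨ : Set.EqOn Ψ Φ (algL L)) :
    RankNondecreasing L Ψ :=
  fun A hA hfin => (h A hA hfin).trans_eq (congrArg opRank (hΨ hA).symm)

lemma Consistent.congr (h : Consistent L Φ N) (hΨ : Set.EqOn Ψ Φ (algL L)) : Consistent L Ψ N :=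
  let ⟨hbot, htop, U, V, hUV⟩ := h
  ⟨hbot, htop, U, V, fun x f => (hΨ (rankOne_mem_algL x.2 f.2)).trans (hUV x f)⟩

lemma WOTContinuousOn.congr (h : WOTContinuousOn L Φ) (hΨ : Set.EqOn Ψ Φ (algL L)) :
    WOTContinuousOn L Ψ :=
  ContinuousOn.congr h (Set.forall_mem_image.2 fun _ hA =>
    congrArg ContinuousLinearMapWOT.ofCLM (hΨ hA))

end Extension

lemma IsCSL.inner_map_eq_of_rankOne {H : Type*} [NormedAddCommGroup H] [InnerProductSpace ℂ H]
    [CompleteSpace H] {L : Set (Submodule ℂ H)} (hL : IsCSL L) (hLs : IsLongstaff L)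
    {Ψ : (H →L[ℂ] H) →ₗ[ℂ] (H →L[ℂ] H)} (hΨ : WOTContinuousOn L Ψ) {h k h' k' : H}
    (hone : ∀ M ∈ famF L, ∀ x ∈ M, ∀ f ∈ (minus L M)ᗮ,
      ⟪k, Ψ (rankOne x f) h⟫_ℂ = ⟪k', rankOne x f h'⟫_ℂ) {A : H →L[ℂ] H} (hA : A ∈ algL L) :
    ⟪k, Ψ A h⟫_ℂ = ⟪k', A h'⟫_ℂ := by
  let ψ : (H →L[ℂ] H) →ₗ[ℂ] ℂ := matrixCoeff h k ∘ₗ Ψ - matrixCoeff h' k'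
  have hψ : ContinuousOn (fun A : H →WOT[ℂ] H => ψ A.toCLM)
      (ContinuousLinearMapWOT.ofCLM '' algL L) :=
    (ContinuousLinearMapWOT.continuousOn_iff.1 hΨ h k).sub
      (ContinuousLinearMapWOT.continuousOn_iff.1 continuousOn_id h' k')
  exact sub_eq_zero.1 (hL.eq_zero_of_rankOne_eq_zero hLs hψ
    (fun M hM x hx f hf => sub_eq_zero.2 (hone M hM x hx f hf)) hA)

theorem stmt_15_general {H : Type*} [NormedAddCommGroup H] [InnerProductSpace ℂ H]
    [CompleteSpace H] (L : Set (Submodule ℂ H)) (hL : IsCSL L) (hLs : IsLongstaff L)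
    (Φ : (H →L[ℂ] H) → (H →L[ℂ] H))
    (hadd : ∀ A ∈ algL L, ∀ B ∈ algL L, Φ (A + B) = Φ A + Φ B)
    (hsmul : ∀ c : ℂ, ∀ A ∈ algL L, Φ (c • A) = c • Φ A)
    (hwot : WOTContinuousOn L Φ) (hrank : RankNondecreasing L Φ)
    (hcons : ∀ N ∈ famF L, Consistent L Φ N) :
    ∃ U V : H →ₗ.[ℂ] H,
      Dense (U.domain : Set H) ∧ Dense (V.domain : Set H) ∧
      (∀ (x : U.domain) (f : V.domain) (M : Submodule ℂ H), M ∈ famF L →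
          (x : H) ∈ M → (f : H) ∈ (minus L M)ᗮ →
          Φ (rankOne (x : H) (f : H)) = rankOne (U x) (V f)) ∧
      (∀ A ∈ algL L, ∀ (h : V.adjoint.domain) (k : U.adjoint.domain),
          ⟪Φ A h, k⟫_ℂ = ⟪A (V.adjoint h), U.adjoint k⟫_ℂ) := by
  obtain ⟨Ψ, hΨ⟩ := exists_linearMap_eqOn_algL hadd hsmul
  obtain ⟨u, v, huv⟩ := exists_map_rankOne_eq hL (hrank.congr hΨ) fun N hN => (hcons N hN).congr hΨ
  let U : H →ₗ.[ℂ] H := ⟨sSup (famF L), u.domRestrict _⟩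
  let V : H →ₗ.[ℂ] H := ⟨⨆ M : famF L, (minus L M)ᗮ, v.domRestrict _⟩
  have hU : Dense (U.domain : Set H) := hL.dense_sSup_famF hLs
  have hV : Dense (V.domain : Set H) := hL.dense_iSup_orthogonal_minus hLs
  refine ⟨U, V, hU, hV, fun x f M hM hx hf =>
    (hΨ (rankOne_mem_algL hx hf)).symm.trans (huv M hM x hx f hf), fun A hA h k => ?_⟩
  rw [← hΨ hA, ← inner_conj_symm, ← inner_conj_symm (A _)]
  refine congrArg _ (hL.inner_map_eq_of_rankOne hLs (hwot.congr hΨ) (fun M hM x hx f hf => ?_) hA)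
  have hxU : ⟪U.adjoint k, x⟫_ℂ = ⟪(k : H), u x⟫_ℂ :=
    U.adjoint_isFormalAdjoint hU k ⟨x, Submodule.mem_sSup_of_mem hM hx⟩
  have hfV : ⟪V.adjoint h, f⟫_ℂ = ⟪(h : H), v f⟫_ℂ :=
    V.adjoint_isFormalAdjoint hV h ⟨f, Submodule.mem_iSup_of_mem ⟨M, hM⟩ hf⟩
  calc ⟪(k : H), Ψ (rankOne x f) h⟫_ℂ = ⟪v f, h⟫_ℂ * ⟪(k : H), u x⟫_ℂ := by
        rw [huv M hM x hx f hf]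
        exact inner_smul_right _ _ _
    _ = ⟪f, V.adjoint h⟫_ℂ * ⟪U.adjoint k, x⟫_ℂ := by
        rw [hxU, ← inner_conj_symm f, hfV, inner_conj_symm]
    _ = ⟪U.adjoint k, rankOne x f (V.adjoint h)⟫_ℂ := (inner_smul_right _ _ _).symm

/-- (Main Theorem) -/
theorem stmt_15 {H : Type*} [NormedAddCommGroup H] [InnerProductSpace ℂ H]
    [CompleteSpace H] [TopologicalSpace.SeparableSpace H]
    (L : Set (Submodule ℂ H)) (hL : IsCSL L) (hcd : IsCompletelyDistributive L)
    (Φ : (H →L[ℂ] H) → (H →L[ℂ] H)) (hlin : IsLinearOnAlg L Φ)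
    (hwot : WOTContinuousOn L Φ) (hrank : RankPreserving L Φ)
    (hcons : ∀ N ∈ famF L, Consistent L Φ N) :
    ∃ U V : H →ₗ.[ℂ] H,
      Dense (U.domain : Set H) ∧ Dense (V.domain : Set H) ∧
      (∀ (x : U.domain) (f : V.domain) (M : Submodule ℂ H), M ∈ famF L →
          (x : H) ∈ M → (f : H) ∈ (minus L M)ᗮ →
          Φ (rankOne (x : H) (f : H)) = rankOne (U x) (V f)) ∧
      (∀ A ∈ algL L, ∀ (h : V.adjoint.domain) (k : U.adjoint.domain),
          (inner ℂ (Φ A (h : H)) (k : H) : ℂ)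
            = inner ℂ (A ((V.adjoint h : H))) ((U.adjoint k : H))) := by
  have : Small.{0} L := small_of_isClosed hL.isClosed
  exact stmt_15_general L hL (hcd.isLongstaff hL.toIsSubspaceLattice) Φ hlin.map_add hlin.map_smul
    hwot (fun A hA hfin => (hrank A hA hfin).ge) hcons
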